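/- Let d ≥ 6 be an integer, let ε ∈ (0,1), and set p = (4d+3)/7, q = (4d+3)/4 − ε, r = (4d+3)/3 − ε. Then for every C > 0 there is a constant A > 0 (depending only on d, ε, C) such that for every nonnegative measurable function f on ℝ^d one has ‖T[f]‖_{L^q(L^r),K} ≤ A ‖f‖_{L^p(ℝ^d)}. -/

import Mathlib

open MeasureTheory ENNReal

noncomputable section

/-- `ℝ^n` with the Euclidean structure. We model `ℝ^d` as `Euc (d-1) × ℝ`,
identifying `ℝ^{d-1}` with the hyperplane `H = span(e_1,…,e_{d-1})` and the last
coordinate with the `e_d` direction. -/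
abbrev Euc (n : ℕ) := EuclideanSpace ℝ (Fin n)

/-- The local x-ray transform: `T[f](ξ,x) = ∫_0^1 f (x + t(ξ + e_d)) dt`. -/
def xrayT {n : ℕ} (f : Euc n × ℝ → ℝ≥0∞) (ξ x : Euc n) : ℝ≥0∞ :=
  ∫⁻ t in Set.Ioc (0:ℝ) 1, f (x + t • ξ, t)

/-- The Kakeya-order mixed norm `‖T[f]‖_{L^q(L^r),K}`. -/
def kakeyaMixedNorm {n : ℕ} (q r C : ℝ) (f : Euc n × ℝ → ℝ≥0∞) : ℝ≥0∞ :=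
  (∫⁻ ξ in Metric.ball (0 : Euc n) C, (∫⁻ x, xrayT f ξ x ^ r) ^ (q / r)) ^ (1 / q)

/-- `‖f‖_{L^p}` for a nonnegative (extended-real-valued) function. -/
def lpNorm {α : Type*} [MeasureSpace α] (p : ℝ) (f : α → ℝ≥0∞) : ℝ≥0∞ :=
  (∫⁻ z, f z ^ p) ^ (1 / p)


theorem lint_affine {n : ℕ} (f : Euc n → ℝ≥0∞) (a : ℝ) (ha : a ≠ 0) (b : Euc n) :
    ENNReal.ofReal (|a| ^ n) * ∫⁻ x, f (a • x + b) = ∫⁻ x, f x := by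
  have h1 : ∫⁻ x, f (a • x + b) = ∫⁻ y, f (y + b) ∂(Measure.map (fun x : Euc n => a • x) volume) := by
    exact (((Homeomorph.smulOfNeZero a ha).toMeasurableEquiv.measurableEmbedding).lintegral_map
      (fun y => f (y + b))).symm
  rw [h1, Measure.map_addHaar_smul _ ha, lintegral_smul_measure, lintegral_add_right_eq_self]
  rw [finrank_euclideanSpace_fin, smul_eq_mul, ← mul_assoc, ← ENNReal.ofReal_mul (by positivity)]
  rw [abs_inv, abs_pow, mul_inv_cancel₀ (by positivity)]
  simp

theorem cs_supp {α : Type*} [MeasurableSpace α] (μ : Measure α) (c : α → ℝ≥0∞) (hc : Measurable c)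
    (S : Set α) (hS : MeasurableSet S) (h0 : ∀ x, x ∉ S → c x = 0) :
    (∫⁻ x, c x ∂μ) ^ 2 ≤ μ S * ∫⁻ x, c x ^ 2 ∂μ := by
  have h := ENNReal.lintegral_mul_le_Lp_mul_Lq μ Real.HolderConjugate.two_two
    (f := S.indicator 1) (g := c) (by exact (measurable_one.indicator hS).aemeasurable) hc.aemeasurable
  have e1 : ∀ x, (S.indicator (1 : α → ℝ≥0∞) * c) x = c x := by
    intro x
    by_cases hx : x ∈ S
    · simp [hx]
    · simp [hx, h0 x hx]
  have e2 : ∀ x, (S.indicator (1 : α → ℝ≥0∞) x) ^ (2:ℝ) = S.indicator 1 x := by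
    intro x
    by_cases hx : x ∈ S <;> simp [hx]
  simp only [e1, e2] at h
  rw [lintegral_indicator_one hS] at h
  calc (∫⁻ x, c x ∂μ) ^ 2 ≤ (μ S ^ (1 / (2:ℝ)) * (∫⁻ x, c x ^ (2:ℝ) ∂μ) ^ (1 / (2:ℝ))) ^ 2 := by gcongr
    _ = μ S * ∫⁻ x, c x ^ 2 ∂μ := by
      rw [mul_pow, ← ENNReal.rpow_natCast, ← ENNReal.rpow_natCast, ← ENNReal.rpow_mul, ← ENNReal.rpow_mul]
      norm_num


theorem swap4 {α : Type*} [MeasurableSpace α] (μ : Measure α) [SFinite μ]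
    (F : α → α → α → α → ℝ≥0∞)
    (hF : Measurable (fun z : (α × α) × (α × α) => F z.1.1 z.1.2 z.2.1 z.2.2)) :
    ∫⁻ a, ∫⁻ b, ∫⁻ c, ∫⁻ d, F a b c d ∂μ ∂μ ∂μ ∂μ
      = ∫⁻ c, ∫⁻ d, ∫⁻ b, ∫⁻ a, F a b c d ∂μ ∂μ ∂μ ∂μ := by
  have e1 : ∀ a b, ∫⁻ c, ∫⁻ d, F a b c d ∂μ ∂μ = ∫⁻ w, F a b w.1 w.2 ∂(μ.prod μ) := by
    intro a b
    rw [lintegral_prod]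
    exact Measurable.aemeasurable (hF.comp (by fun_prop : Measurable fun w : α × α => ((a, b), w)))
  have e2 : ∀ c d, ∫⁻ b, ∫⁻ a, F a b c d ∂μ ∂μ = ∫⁻ z, F z.1 z.2 c d ∂(μ.prod μ) := by
    intro c d
    rw [lintegral_prod_symm]
    exact Measurable.aemeasurable (hF.comp (by fun_prop : Measurable fun z : α × α => (z, (c, d))))
  simp only [e1, e2]
  have m1 : Measurable (fun z : α × α => ∫⁻ w, F z.1 z.2 w.1 w.2 ∂(μ.prod μ)) :=
    Measurable.lintegral_prod_right' (f := fun p : (α × α) × (α × α) => F p.1.1 p.1.2 p.2.1 p.2.2) hF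
  have m2 : Measurable (fun w : α × α => ∫⁻ z, F z.1 z.2 w.1 w.2 ∂(μ.prod μ)) :=
    Measurable.lintegral_prod_left' (f := fun p : (α × α) × (α × α) => F p.1.1 p.1.2 p.2.1 p.2.2) hF
  rw [← lintegral_prod (fun z : α × α => ∫⁻ w, F z.1 z.2 w.1 w.2 ∂(μ.prod μ)) m1.aemeasurable,
    ← lintegral_prod (fun w : α × α => ∫⁻ z, F z.1 z.2 w.1 w.2 ∂(μ.prod μ)) m2.aemeasurable]
  exact lintegral_lintegral_swap hF.aemeasurable

theorem quad_bound {n : ℕ} (χ : Euc n × Euc n → ℝ≥0∞) (hχ : Measurable χ) (M : ℝ≥0∞)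
    (hM : ∀ ξ, ∫⁻ x, χ (ξ, x) ≤ M) (e2 e3 : Euc n → ℝ≥0∞) (h2 : Measurable e2) (h3 : Measurable e3)
    (s u ρ β γ k m1 m2 : ℝ) (hus : u - s ≠ 0) (hρ : 1 - ρ ≠ 0) (hβ : β ≠ 0) (hk : k ≠ 0)
    (r1 : m2 * β = γ) (r2 : m1 * ρ = 1 - γ) (r3 : m1 * (1 - ρ) + m2 * (1 - β) = 0)
    (r4 : (1 - γ) * (u - s) = k) :
    ENNReal.ofReal (|β| ^ n) * (ENNReal.ofReal (|1 - ρ| ^ n) * (ENNReal.ofReal (|k| ^ n) *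
      ∫⁻ A, ∫⁻ P, ∫⁻ B, ∫⁻ Q, χ ((u - s)⁻¹ • (A - P), P - s • ((u - s)⁻¹ • (A - P))) *
        (e2 (ρ • P + (1 - ρ) • B) * (e3 (β • Q + (1 - β) • B) * e3 (γ • Q + (1 - γ) • A)))))
    ≤ ENNReal.ofReal (|u - s| ^ n) * (M * ((∫⁻ y, e2 y) * (∫⁻ y, e3 y) ^ 2)) := by
  set X : Euc n → Euc n → ℝ≥0∞ := fun P A =>
    χ ((u - s)⁻¹ • (A - P), P - s • ((u - s)⁻¹ • (A - P))) with hX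
  have hXm : Measurable (fun z : Euc n × Euc n => X z.1 z.2) := by
    simp only [hX]; fun_prop
  -- change of variables in Q and B
  have step : ∀ A P, ENNReal.ofReal (|β| ^ n) * (ENNReal.ofReal (|1 - ρ| ^ n) *
      ∫⁻ B, ∫⁻ Q, X P A *
        (e2 (ρ • P + (1 - ρ) • B) * (e3 (β • Q + (1 - β) • B) * e3 (γ • Q + (1 - γ) • A))))
      = ∫⁻ D2, ∫⁻ D1, X P A * (e2 D1 * (e3 D2 *
          e3 (m1 • D1 + m2 • D2 + k • ((u - s)⁻¹ • (A - P))))) := by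
    intro A P
    have s1 : ∀ B, ENNReal.ofReal (|β| ^ n) * ∫⁻ Q, X P A *
        (e2 (ρ • P + (1 - ρ) • B) * (e3 (β • Q + (1 - β) • B) * e3 (γ • Q + (1 - γ) • A)))
        = ∫⁻ D2, X P A * (e2 (ρ • P + (1 - ρ) • B) * (e3 D2 *
          e3 (m2 • (D2 - (1 - β) • B) + (1 - γ) • A))) := by
      intro B
      rw [← lint_affine (fun D2 => X P A * (e2 (ρ • P + (1 - ρ) • B) * (e3 D2 *
          e3 (m2 • (D2 - (1 - β) • B) + (1 - γ) • A)))) β hβ ((1 - β) • B)]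
      congr 1
      apply lintegral_congr
      intro Q
      simp only [add_sub_cancel_right, smul_smul, r1]
    have s2 : ∀ D2, ENNReal.ofReal (|1 - ρ| ^ n) * ∫⁻ B, X P A * (e2 (ρ • P + (1 - ρ) • B) * (e3 D2 *
          e3 (m2 • (D2 - (1 - β) • B) + (1 - γ) • A)))
        = ∫⁻ D1, X P A * (e2 D1 * (e3 D2 *
          e3 (m1 • D1 + m2 • D2 + k • ((u - s)⁻¹ • (A - P))))) := by
      intro D2
      rw [← lint_affine (fun D1 => X P A * (e2 D1 * (e3 D2 *
          e3 (m1 • D1 + m2 • D2 + k • ((u - s)⁻¹ • (A - P)))))) (1 - ρ) hρ (ρ • P)]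
      congr 1
      apply lintegral_congr
      intro B
      have : m2 • (D2 - (1 - β) • B) + (1 - γ) • A
        = m1 • ((1 - ρ) • B + ρ • P) + m2 • D2 + k • ((u - s)⁻¹ • (A - P)) := by
        have hk' : k * (u - s)⁻¹ = 1 - γ := by
          rw [← r4]; field_simp
        have hm : m1 * (1 - ρ) = - (m2 * (1 - β)) := by linarith
        simp only [smul_add, smul_sub, smul_smul, hk', r2, hm]
        module
      rw [this, add_comm (ρ • P)]
    rw [mul_left_comm, ← lintegral_const_mul]
    · simp only [s1]
      rw [lintegral_lintegral_swap, ← lintegral_const_mul]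
      · simp only [s2]
      · apply Measurable.lintegral_prod_right'
          (f := fun z : Euc n × Euc n => X P A * (e2 (ρ • P + (1 - ρ) • z.2) * (e3 z.1 *
          e3 (m2 • (z.1 - (1 - β) • z.2) + (1 - γ) • A))))
        fun_prop
      · apply Measurable.aemeasurable
        simp only [Function.uncurry_def]
        fun_prop
    · apply Measurable.lintegral_prod_right'
          (f := fun z : Euc n × Euc n => X P A *
        (e2 (ρ • P + (1 - ρ) • z.1) * (e3 (β • z.2 + (1 - β) • z.1) * e3 (γ • z.2 + (1 - γ) • A))))
      fun_prop
  have meas4 : Measurable (fun z : (Euc n × Euc n) × (Euc n × Euc n) =>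
      X z.1.2 z.1.1 * (e2 z.2.2 * (e3 z.2.1 *
          e3 (m1 • z.2.2 + m2 • z.2.1 + k • ((u - s)⁻¹ • (z.1.1 - z.1.2)))))) := by
    simp only [hX]; fun_prop
  have inner : ∀ D2 D1, ENNReal.ofReal (|k| ^ n) * ∫⁻ P, ∫⁻ A, X P A * (e2 D1 * (e3 D2 *
          e3 (m1 • D1 + m2 • D2 + k • ((u - s)⁻¹ • (A - P)))))
      ≤ ENNReal.ofReal (|u - s| ^ n) * (M * (∫⁻ y, e3 y) * (e2 D1 * e3 D2)) := by
    intro D2 D1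
    have t1 : ∀ P, ∫⁻ A, X P A * (e2 D1 * (e3 D2 *
          e3 (m1 • D1 + m2 • D2 + k • ((u - s)⁻¹ • (A - P)))))
        = ENNReal.ofReal (|u - s| ^ n) * ∫⁻ ξ, χ (ξ, P - s • ξ) * (e2 D1 * (e3 D2 *
          e3 (m1 • D1 + m2 • D2 + k • ξ))) := by
      intro P
      rw [← lint_affine (fun A => X P A * (e2 D1 * (e3 D2 *
          e3 (m1 • D1 + m2 • D2 + k • ((u - s)⁻¹ • (A - P)))))) (u - s) hus P]
      congr 1
      apply lintegral_congr
      intro ξ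
      simp only [hX, add_sub_cancel_right, smul_smul, inv_mul_cancel₀ hus, one_smul]
      rw [show s * (u - s)⁻¹ * (u - s) = s by field_simp]
    simp only [t1]
    rw [lintegral_const_mul]
    · rw [lintegral_lintegral_swap]
      · have t2 : ∀ ξ, ∫⁻ P, χ (ξ, P - s • ξ) * (e2 D1 * (e3 D2 * e3 (m1 • D1 + m2 • D2 + k • ξ)))
            ≤ M * (e2 D1 * e3 D2) * e3 (k • ξ + (m1 • D1 + m2 • D2)) := by
          intro ξ
          rw [lintegral_mul_const _ (by fun_prop)]
          rw [lintegral_sub_right_eq_self (fun P => χ (ξ, P))]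
          calc _ ≤ M * (e2 D1 * (e3 D2 * e3 (m1 • D1 + m2 • D2 + k • ξ))) := by
                gcongr; exact hM ξ
            _ = _ := by rw [add_comm (k • ξ)]; ring
        calc _ ≤ ENNReal.ofReal (|k| ^ n) * (ENNReal.ofReal (|u - s| ^ n) *
                ∫⁻ ξ, M * (e2 D1 * e3 D2) * e3 (k • ξ + (m1 • D1 + m2 • D2))) := by
              gcongr; exact t2 _
          _ = ENNReal.ofReal (|u - s| ^ n) * (M * (e2 D1 * e3 D2) * (ENNReal.ofReal (|k| ^ n) *
                ∫⁻ ξ, e3 (k • ξ + (m1 • D1 + m2 • D2)))) := by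
              rw [lintegral_const_mul _ (by fun_prop)]; ring
          _ = _ := by rw [lint_affine _ k hk]; ring
      · apply Measurable.aemeasurable
        simp only [Function.uncurry_def]
        fun_prop
    · apply Measurable.lintegral_prod_right'
          (f := fun z : Euc n × Euc n => χ (z.2, z.1 - s • z.2) * (e2 D1 * (e3 D2 *
          e3 (m1 • D1 + m2 • D2 + k • z.2))))
      fun_prop
  have comb : ENNReal.ofReal (|β| ^ n) * (ENNReal.ofReal (|1 - ρ| ^ n) * 
      ∫⁻ A, ∫⁻ P, ∫⁻ B, ∫⁻ Q, X P A *
        (e2 (ρ • P + (1 - ρ) • B) * (e3 (β • Q + (1 - β) • B) * e3 (γ • Q + (1 - γ) • A))))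
      = ∫⁻ D2, ∫⁻ D1, ∫⁻ P, ∫⁻ A, X P A * (e2 D1 * (e3 D2 *
          e3 (m1 • D1 + m2 • D2 + k • ((u - s)⁻¹ • (A - P))))) := by
    rw [← swap4 volume (fun A P D2 D1 => X P A * (e2 D1 * (e3 D2 *
          e3 (m1 • D1 + m2 • D2 + k • ((u - s)⁻¹ • (A - P)))))) meas4]
    simp only [← step]
    simp only [lintegral_const_mul' _ _ ENNReal.ofReal_ne_top]
  calc _ = ENNReal.ofReal (|k| ^ n) * (ENNReal.ofReal (|β| ^ n) * (ENNReal.ofReal (|1 - ρ| ^ n) * 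
      ∫⁻ A, ∫⁻ P, ∫⁻ B, ∫⁻ Q, X P A *
        (e2 (ρ • P + (1 - ρ) • B) * (e3 (β • Q + (1 - β) • B) * e3 (γ • Q + (1 - γ) • A))))) := by ring
    _ = ∫⁻ D2, ∫⁻ D1, ENNReal.ofReal (|k| ^ n) * ∫⁻ P, ∫⁻ A, X P A * (e2 D1 * (e3 D2 *
          e3 (m1 • D1 + m2 • D2 + k • ((u - s)⁻¹ • (A - P))))) := by
      rw [comb]
      simp only [lintegral_const_mul' _ _ ENNReal.ofReal_ne_top]
    _ ≤ ∫⁻ D2, ∫⁻ D1, ENNReal.ofReal (|u - s| ^ n) * (M * (∫⁻ y, e3 y) * (e2 D1 * e3 D2)) := by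
      exact lintegral_mono fun D2 => lintegral_mono fun D1 => inner D2 D1
    _ = _ := by
      simp only [lintegral_const_mul' _ _ ENNReal.ofReal_ne_top]
      congr 1
      have : ∀ D2, ∫⁻ D1, M * (∫⁻ y, e3 y) * (e2 D1 * e3 D2) = M * (∫⁻ y, e3 y) * (∫⁻ y, e2 y) * e3 D2 := by
        intro D2
        rw [lintegral_const_mul _ (by fun_prop), lintegral_mul_const _ h2]; ring
      simp only [this]
      rw [lintegral_const_mul _ h3]; ring


/-- measure of time slice -/
def slice {n : ℕ} (E : Set (Euc n × ℝ)) (t : ℝ) : Set (Euc n) := (fun y => (y, t)) ⁻¹' E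

theorem slice_meas {n : ℕ} {E : Set (Euc n × ℝ)} (hE : MeasurableSet E) (t : ℝ) :
    MeasurableSet (slice E t) := hE.preimage (by fun_prop)

theorem line_val {n : ℕ} (P B : Euc n) (s b a δ : ℝ) (hb : b - s ≠ 0) (h : a - s = (1 - δ) * (b - s)) :
    P - s • ((b - s)⁻¹ • (B - P)) + a • ((b - s)⁻¹ • (B - P)) = δ • P + (1 - δ) • B := by
  have h' : a * (b - s)⁻¹ = (1 - δ) + s * (b - s)⁻¹ := by
    have : a = (1 - δ) * (b - s) + s := by linarith
    rw [this]; field_simp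
  simp only [smul_smul, h']
  module

theorem ftl_comb {V U T Bb Rr K C2 W1 W2 Fs Fu Ft F2 F3 M : ℝ≥0∞} (hU0 : U ≠ 0) (hU : U ≠ ∞)
    (h1 : V ^ 2 ≤ Fs * C2) (h2 : W1 = U * (T * C2)) (h3 : W1 ^ 2 ≤ Fu * Ft * W2)
    (h4 : Bb * (Rr * (K * W2)) ≤ U * (M * (F2 * F3 ^ 2))) :
    U * T ^ 2 * Bb * Rr * K * V ^ 4 ≤ M * (Fs ^ 2 * Fu * Ft * F2 * F3 ^ 2) := by
  rw [← ENNReal.mul_le_mul_iff_right hU0 hU]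
  calc U * (U * T ^ 2 * Bb * Rr * K * V ^ 4) = (U * T) ^ 2 * Bb * Rr * K * (V ^ 2) ^ 2 := by ring
    _ ≤ (U * T) ^ 2 * Bb * Rr * K * (Fs * C2) ^ 2 := by gcongr
    _ = Bb * Rr * K * Fs ^ 2 * W1 ^ 2 := by rw [h2]; ring
    _ ≤ Bb * Rr * K * Fs ^ 2 * (Fu * Ft * W2) := by gcongr
    _ = Fs ^ 2 * Fu * Ft * (Bb * (Rr * (K * W2))) := by ring
    _ ≤ Fs ^ 2 * Fu * Ft * (U * (M * (F2 * F3 ^ 2))) := by gcongr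
    _ = _ := by ring

theorem ftl {n : ℕ} (E : Set (Euc n × ℝ)) (hE : MeasurableSet E) (G : Set (Euc n × Euc n))
    (hG : MeasurableSet G) (M : ℝ≥0∞) (hM : ∀ ξ, volume (Prod.mk ξ ⁻¹' G) ≤ M)
    (s t u ρ : ℝ) (hst : t - s ≠ 0) (hus : u - s ≠ 0) (htu : t - u ≠ 0) (hρ : ρ ≠ 0) (hρ1 : 1 - ρ ≠ 0)
    (h3s : t - ρ * (t - u) - s ≠ 0)
    (is : ∀ g ∈ G, (g.2 + s • g.1, s) ∈ E) (it : ∀ g ∈ G, (g.2 + t • g.1, t) ∈ E)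
    (iu : ∀ g ∈ G, (g.2 + u • g.1, u) ∈ E)
    (i2 : ∀ g ∈ G, (g.2 + (t - ρ * (t - s)) • g.1, (t - ρ * (t - s))) ∈ E)
    (i3 : ∀ g ∈ G, (g.2 + (t - ρ * (t - u)) • g.1, (t - ρ * (t - u))) ∈ E) :
    ENNReal.ofReal ((|u - s| * |t - s| * |ρ| * |t - u| * |1 - ρ| * |t - ρ * (t - u) - s|) ^ n)
      * volume G ^ 4 ≤ M * (volume (slice E s) ^ 2 * volume (slice E u) * volume (slice E t) *
        volume (slice E (t - ρ * (t - s))) * volume (slice E (t - ρ * (t - u))) ^ 2) := by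
  set χ : Euc n × Euc n → ℝ≥0∞ := G.indicator 1 with hχd
  have hχ : Measurable χ := measurable_one.indicator hG
  have hχM : ∀ ξ, ∫⁻ x, χ (ξ, x) ≤ M := by
    intro ξ
    refine le_trans (le_of_eq ?_) (hM ξ)
    rw [← lintegral_indicator_one (hG.preimage (by fun_prop))]
    rfl
  set X : Euc n → Euc n → ℝ≥0∞ := fun P A =>
    χ ((u - s)⁻¹ • (A - P), P - s • ((u - s)⁻¹ • (A - P))) with hX
  set Z : Euc n → Euc n → ℝ≥0∞ := fun P B =>
    χ ((t - s)⁻¹ • (B - P), P - s • ((t - s)⁻¹ • (B - P))) with hZ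
  have hXm : Measurable (fun z : Euc n × Euc n => X z.1 z.2) := by
    simp only [hX]; fun_prop
  have hZm : Measurable (fun z : Euc n × Euc n => Z z.1 z.2) := by
    simp only [hZ]; fun_prop
  set c : Euc n → ℝ≥0∞ := fun P => ∫⁻ ξ, χ (ξ, P - s • ξ) with hc
  have hcm : Measurable c := by
    apply Measurable.lintegral_prod_right' (f := fun z : Euc n × Euc n => χ (z.2, z.1 - s • z.2))
    fun_prop
  have cX : ∀ b : ℝ, b - s ≠ 0 → ∀ P,
      ∫⁻ A, χ ((b - s)⁻¹ • (A - P), P - s • ((b - s)⁻¹ • (A - P))) = ENNReal.ofReal (|b - s| ^ n) * c P := by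
    intro b hb P
    rw [← lint_affine (fun A => χ ((b - s)⁻¹ • (A - P), P - s • ((b - s)⁻¹ • (A - P)))) (b - s) hb P]
    congr 1
    apply lintegral_congr
    intro ξ
    simp only [add_sub_cancel_right, inv_smul_smul₀ hb]
  have cint : ∫⁻ P, c P = volume G := by
    rw [hc, lintegral_lintegral_swap]
    · have : ∀ ξ, ∫⁻ P, χ (ξ, P - s • ξ) = ∫⁻ x, χ (ξ, x) := by
        intro ξ
        exact lintegral_sub_right_eq_self (fun P => χ (ξ, P)) _
      simp only [this]
      rw [← lintegral_indicator_one hG]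
      exact (lintegral_prod _ hχ.aemeasurable).symm
    · apply Measurable.aemeasurable
      simp only [Function.uncurry_def]
      fun_prop
  have χz : ∀ g, g ∉ G → χ g = 0 := fun g hg => by simp [hχd, hg]
  have χle : ∀ g, χ g ≤ 1 := fun g => by
    rw [hχd]; exact Set.indicator_le_self' (by simp) g |>.trans (by simp)
  have C1 := cs_supp volume c hcm (slice E s) (slice_meas hE s) (by
    intro P hP
    rw [hc]
    simp only
    rw [lintegral_eq_zero_iff (by fun_prop)]
    refine Filter.Eventually.of_forall fun ξ => χz _ fun hg => hP ?_
    have := is _ hg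
    simpa [slice] using this)
  rw [cint] at C1
  set W : Euc n × Euc n → ℝ≥0∞ := fun z => ∫⁻ P, X P z.1 * Z P z.2 with hW
  have hWm : Measurable W := by
    apply Measurable.lintegral_prod_right' (f := fun y : (Euc n × Euc n) × Euc n => X y.2 y.1.1 * Z y.2 y.1.2)
    simp only [hX, hZ]; fun_prop
  -- total mass of W
  have W1 : ∫⁻ z, W z ∂(volume.prod volume) = ENNReal.ofReal (|u - s| ^ n) *
      (ENNReal.ofReal (|t - s| ^ n) * ∫⁻ P, c P ^ 2) := by
    rw [hW, lintegral_lintegral_swap]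
    · have : ∀ P, ∫⁻ z : Euc n × Euc n, X P z.1 * Z P z.2 ∂(volume.prod volume)
          = ENNReal.ofReal (|u - s| ^ n) * (ENNReal.ofReal (|t - s| ^ n) * c P ^ 2) := by
        intro P
        rw [lintegral_prod_mul (f := X P) (g := Z P)
          (by simp only [hX]; fun_prop) (by simp only [hZ]; fun_prop)]
        rw [hX, hZ, cX u hus P, cX t hst P]; ring
      simp only [this]
      simp only [lintegral_const_mul' _ _ ENNReal.ofReal_ne_top]
    · apply Measurable.aemeasurable
      simp only [Function.uncurry_def, hX, hZ]
      fun_prop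
  have C2 := cs_supp (volume.prod volume) W hWm (slice E u ×ˢ slice E t)
    ((slice_meas hE u).prod (slice_meas hE t)) (by
    intro z hz
    rw [hW]
    simp only
    rw [lintegral_eq_zero_iff (by simp only [hX, hZ]; fun_prop)]
    refine Filter.Eventually.of_forall fun P => ?_
    simp only [Pi.zero_apply, mul_eq_zero]
    by_contra hcon
    push Not at hcon
    apply hz
    constructor
    · have hg : ((u - s)⁻¹ • (z.1 - P), P - s • ((u - s)⁻¹ • (z.1 - P))) ∈ G := by
        by_contra h; exact hcon.1 (χz _ h)
      have := iu _ hg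
      simp only [slice, Set.mem_preimage]
      rw [line_val P z.1 s u u 0 hus (by ring)] at this
      simpa using this
    · have hg : ((t - s)⁻¹ • (z.2 - P), P - s • ((t - s)⁻¹ • (z.2 - P))) ∈ G := by
        by_contra h; exact hcon.2 (χz _ h)
      have := it _ hg
      simp only [slice, Set.mem_preimage]
      rw [line_val P z.2 s t t 0 hst (by ring)] at this
      simpa using this)
  rw [Measure.prod_prod] at C2
  set e2 : Euc n → ℝ≥0∞ := (slice E (t - ρ * (t - s))).indicator 1 with he2
  set e3 : Euc n → ℝ≥0∞ := (slice E (t - ρ * (t - u))).indicator 1 with he3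
  have he2m : Measurable e2 := measurable_one.indicator (slice_meas hE _)
  have he3m : Measurable e3 := measurable_one.indicator (slice_meas hE _)
  set β : ℝ := ρ * (t - u) / (t - s) with hβ
  set γ : ℝ := (1 - ρ) * (u - t) / (u - s) with hγ
  have key : ∀ (a b δ : ℝ) (hb : b - s ≠ 0) (h : a - s = (1 - δ) * (b - s))
      (hi : ∀ g ∈ G, (g.2 + a • g.1, a) ∈ E) (P B : Euc n),
      χ ((b - s)⁻¹ • (B - P), P - s • ((b - s)⁻¹ • (B - P)))
        ≤ (slice E a).indicator 1 (δ • P + (1 - δ) • B) := by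
    intro a b δ hb h hi P B
    by_cases hg : ((b - s)⁻¹ • (B - P), P - s • ((b - s)⁻¹ • (B - P))) ∈ G
    · have := hi _ hg
      simp only at this
      rw [line_val P B s b a δ hb h] at this
      rw [Set.indicator_of_mem (show δ • P + (1 - δ) • B ∈ slice E a from this)]
      exact χle _
    · rw [χz _ hg]; exact zero_le
  have Z2 : ∀ P B, Z P B ≤ e2 (ρ • P + (1 - ρ) • B) := key _ _ _ hst (by ring) i2
  have Z3 : ∀ P B, Z P B ≤ e3 (β • P + (1 - β) • B) :=
    key _ _ _ hst (by rw [hβ]; field_simp; ring) i3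
  have X3 : ∀ P A, X P A ≤ e3 (γ • P + (1 - γ) • A) :=
    key _ _ _ hus (by rw [hγ]; field_simp; ring) i3
  have W2 : ∫⁻ z, W z ^ 2 ∂(volume.prod volume) ≤ ∫⁻ A, ∫⁻ P, ∫⁻ B, ∫⁻ Q, X P A *
        (e2 (ρ • P + (1 - ρ) • B) * (e3 (β • Q + (1 - β) • B) * e3 (γ • Q + (1 - γ) • A))) := by
    rw [lintegral_prod _ (by fun_prop)]
    apply lintegral_mono
    intro A
    simp only
    rw [lintegral_lintegral_swap]
    · apply lintegral_mono
      intro B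
      simp only [hW]
      rw [sq, ← lintegral_mul_const _ (by simp only [hX, hZ]; fun_prop)]
      apply lintegral_mono
      intro P
      simp only
      rw [← lintegral_const_mul _ (by simp only [hX, hZ]; fun_prop)]
      apply lintegral_mono
      intro Q
      simp only
      calc X P A * Z P B * (X Q A * Z Q B) = X P A * (Z P B * (Z Q B * X Q A)) := by ring
        _ ≤ _ := by
          gcongr
          · exact Z2 _ _
          · exact Z3 _ _
          · exact X3 _ _
    · apply Measurable.aemeasurable
      simp only [Function.uncurry_def]
      apply Measurable.lintegral_prod_right' (f := fun y : (Euc n × Euc n) × Euc n =>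
        X y.1.1 A * (e2 (ρ • y.1.1 + (1 - ρ) • y.1.2) * (e3 (β • y.2 + (1 - β) • y.1.2)
          * e3 (γ • y.2 + (1 - γ) • A))))
      simp only [hX]
      fun_prop
  have hβ0 : β ≠ 0 := by rw [hβ]; positivity
  have hk : (1 - γ) * (u - s) = t - ρ * (t - u) - s := by rw [hγ]; field_simp; ring
  have Q := quad_bound χ hχ M hχM e2 e3 he2m he3m s u ρ β γ (t - ρ * (t - u) - s)
    ((t - s) * (1 - β) / (ρ * (u - s))) (-(1 - ρ) * (t - s) / (ρ * (u - s))) hus hρ1 hβ0 h3s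
    (by rw [hβ, hγ]; field_simp; ring) (by rw [hβ, hγ]; field_simp; ring) (by field_simp; ring) hk
  have Q' : ENNReal.ofReal (|β| ^ n) * (ENNReal.ofReal (|1 - ρ| ^ n) *
      (ENNReal.ofReal (|t - ρ * (t - u) - s| ^ n) * ∫⁻ z, W z ^ 2 ∂(volume.prod volume))) ≤
      ENNReal.ofReal (|u - s| ^ n) * (M * (volume (slice E (t - ρ * (t - s))) *
        volume (slice E (t - ρ * (t - u))) ^ 2)) := by
    rw [he2, he3, lintegral_indicator_one (slice_meas hE _),
      lintegral_indicator_one (slice_meas hE _)] at Q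
    exact le_trans (by gcongr) Q
  have hU0 : ENNReal.ofReal (|u - s| ^ n) ≠ 0 := by
    have : 0 < |u - s| ^ n := by positivity
    exact (ENNReal.ofReal_pos.2 this).ne'
  have R := ftl_comb hU0 ENNReal.ofReal_ne_top C1 W1 C2 Q'
  refine le_trans (le_of_eq ?_) R
  congr 1
  rw [← ENNReal.ofReal_pow (by positivity)]
  iterate 4 rw [← ENNReal.ofReal_mul (by positivity)]
  congr 1
  have : |ρ| * |t - u| = |β| * |t - s| := by
    rw [← abs_mul, ← abs_mul, hβ]; congr 1; field_simp
  rw [show |u - s| * |t - s| * |ρ| * |t - u| = |u - s| * |t - s| * (|ρ| * |t - u|) by ring, this]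
  ring


/-- indicator of `a ≤ b` -/
def lei (a b : ℝ) : ℝ≥0∞ := if a ≤ b then 1 else 0

@[fun_prop]
theorem measurable_lei {α : Type*} [MeasurableSpace α] {f g : α → ℝ} (hf : Measurable f)
    (hg : Measurable g) : Measurable fun x => lei (f x) (g x) :=
  Measurable.ite (measurableSet_le hf hg) measurable_const measurable_const

theorem lei_le_one (a b : ℝ) : lei a b ≤ 1 := by unfold lei; split_ifs <;> simp

theorem lei_of_le {a b : ℝ} (h : a ≤ b) : lei a b = 1 := by simp [lei, h]
theorem lei_of_lt {a b : ℝ} (h : b < a) : lei a b = 0 := by simp [lei, h]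

theorem lsw {f : ℝ → ℝ → ℝ≥0∞} (h : Measurable fun z : ℝ × ℝ => f z.1 z.2) :
    ∫⁻ a, ∫⁻ b, f a b = ∫⁻ b, ∫⁻ a, f a b :=
  lintegral_lintegral_swap h.aemeasurable

theorem lint_abs (f : ℝ → ℝ≥0∞) : ∫⁻ x, f |x| = 2 * ∫⁻ x in Set.Ioi 0, f x := by
  rw [← lintegral_add_compl (fun x => f |x|) (measurableSet_Ioi (a := (0:ℝ)))]
  have h1 : ∫⁻ x in Set.Ioi 0, f |x| = ∫⁻ x in Set.Ioi 0, f x := by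
    apply setLIntegral_congr_fun measurableSet_Ioi
    intro x hx
    simp only [Set.mem_Ioi] at hx
    simp [abs_of_pos hx]
  have h2 : ∫⁻ x in (Set.Ioi (0:ℝ))ᶜ, f |x| = ∫⁻ x in Set.Ioi 0, f x := by
    rw [Set.compl_Ioi, setLIntegral_congr Iio_ae_eq_Iic.symm]
    have hm : MeasurePreserving (Neg.neg : ℝ → ℝ) volume volume := Measure.measurePreserving_neg volume
    have := hm.setLIntegral_comp_preimage_emb (MeasurableEquiv.neg ℝ).measurableEmbedding (fun x => f |x|) (Set.Iio 0)
    rw [← this, ← h1]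
    simp
  rw [h1, h2]; ring

theorem int_near (η : ℝ) (hη : 0 < η) : ∃ K : ℝ, 0 < K ∧
    ∀ z : ℝ, ∫⁻ x, lei |x - z| 1 * ENNReal.ofReal (|x - z| ^ (-1 + η)) ≤ ENNReal.ofReal K := by
  have hfin : ∫⁻ x : ℝ, lei |x| 1 * ENNReal.ofReal (|x| ^ (-1 + η)) ≠ ∞ := by
    rw [lint_abs (fun x => lei x 1 * ENNReal.ofReal (x ^ (-1 + η)))]
    apply ENNReal.mul_ne_top (by simp)
    have hI : IntegrableOn (fun x : ℝ => x ^ (-1 + η)) (Set.Ioc 0 1) := by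
      rw [← intervalIntegrable_iff_integrableOn_Ioc_of_le zero_le_one]
      exact intervalIntegral.intervalIntegrable_rpow' (by linarith)
    have : ∫⁻ x in Set.Ioi (0:ℝ), lei x 1 * ENNReal.ofReal (x ^ (-1 + η))
        ≤ ∫⁻ x in Set.Ioc (0:ℝ) 1, ENNReal.ofReal (x ^ (-1 + η)) := by
      rw [← lintegral_indicator measurableSet_Ioi, ← lintegral_indicator measurableSet_Ioc]
      apply lintegral_mono
      intro x
      by_cases h : 0 < x
      · by_cases h1 : x ≤ 1
        · simp [h, h1, lei]
        · simp [h, h1, lei]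
      · simp [h]
    refine ne_top_of_le_ne_top ?_ this
    exact hI.lintegral_lt_top.ne
  refine ⟨(∫⁻ x : ℝ, lei |x| 1 * ENNReal.ofReal (|x| ^ (-1 + η))).toReal + 1, by positivity, ?_⟩
  intro z
  rw [lintegral_sub_right_eq_self (fun x : ℝ => lei |x| 1 * ENNReal.ofReal (|x| ^ (-1 + η)))]
  rw [← ENNReal.ofReal_toReal hfin]
  apply ENNReal.ofReal_le_ofReal
  rw [ENNReal.ofReal_toReal hfin]; linarith

theorem int_far (κ : ℝ) (hκ : 0 < κ) (a : ℝ) (ha : 0 < a) (z : ℝ) :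
    ∫⁻ x, lei a |z - x| * ENNReal.ofReal (|z - x| ^ (-1 - κ)) ≤ ENNReal.ofReal (2 / κ * a ^ (-κ)) := by
  rw [lintegral_sub_left_eq_self (fun x : ℝ => lei a |x| * ENNReal.ofReal (|x| ^ (-1 - κ)))]
  rw [lint_abs (fun x => lei a x * ENNReal.ofReal (x ^ (-1 - κ)))]
  have e : ∫⁻ x in Set.Ioi (0:ℝ), lei a x * ENNReal.ofReal (x ^ (-1 - κ))
      = ∫⁻ x in Set.Ioi a, ENNReal.ofReal (x ^ (-1 - κ)) := by
    rw [show ∫⁻ x in Set.Ioi a, ENNReal.ofReal (x ^ (-1 - κ)) = ∫⁻ x in Set.Ici a, ENNReal.ofReal (x ^ (-1 - κ))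
      from setLIntegral_congr Ioi_ae_eq_Ici]
    rw [← lintegral_indicator measurableSet_Ioi, ← lintegral_indicator measurableSet_Ici]
    apply lintegral_congr
    intro x
    by_cases h : a ≤ x
    · have : 0 < x := by linarith
      simp [h, this, lei]
    · simp [h, lei]
  rw [e, ← ofReal_integral_eq_lintegral_ofReal]
  · rw [integral_Ioi_rpow_of_lt (by linarith) ha]
    rw [show (2:ℝ≥0∞) = ENNReal.ofReal 2 by simp, ← ENNReal.ofReal_mul (by norm_num)]
    apply ENNReal.ofReal_le_ofReal
    rw [show -1 - κ + 1 = -κ by ring]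
    apply le_of_eq; field_simp
  · exact integrableOn_Ioi_rpow_of_lt (by linarith) ha
  · filter_upwards [ae_restrict_mem measurableSet_Ioi] with x hx
    have : 0 < x := lt_trans ha hx
    simp only [Pi.zero_apply]; positivity


theorem lint_affine1 (f : ℝ → ℝ≥0∞) (a : ℝ) (ha : a ≠ 0) (b : ℝ) :
    ENNReal.ofReal |a| * ∫⁻ x, f (a * x + b) = ∫⁻ x, f x := by
  have h1 : ∫⁻ x, f (a * x + b) = ∫⁻ y, f (y + b) ∂(Measure.map (fun x : ℝ => a * x) volume) := by
    exact (((Homeomorph.mulLeft₀ a ha).toMeasurableEquiv.measurableEmbedding).lintegral_map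
      (fun y => f (y + b))).symm
  rw [h1, Real.map_volume_mul_left ha, lintegral_smul_measure, lintegral_add_right_eq_self]
  rw [smul_eq_mul, ← mul_assoc, ← ENNReal.ofReal_mul (by positivity)]
  rw [abs_inv, mul_inv_cancel₀ (by positivity)]
  simp

theorem lint_ball (t a : ℝ) : ∫⁻ s, lei |t - s| a = ENNReal.ofReal (2 * a) := by
  have : ∀ s, lei |t - s| a = (Metric.closedBall t a).indicator 1 s := by
    intro s
    by_cases h : |t - s| ≤ a
    · rw [lei_of_le h, Set.indicator_of_mem]; rfl
      rw [Metric.mem_closedBall, Real.dist_eq, abs_sub_comm]; exact h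
    · rw [lei_of_lt (not_le.1 h), Set.indicator_of_notMem]
      rw [Metric.mem_closedBall, Real.dist_eq, abs_sub_comm]; exact h
  simp only [this]
  rw [lintegral_indicator_one measurableSet_closedBall, Real.volume_closedBall]

theorem perm_in {F : ℝ → ℝ → ℝ → ℝ≥0∞} (h : Measurable fun z : ℝ × ℝ × ℝ => F z.1 z.2.1 z.2.2) :
    ∫⁻ a, ∫⁻ b, ∫⁻ c, F a c b = ∫⁻ a, ∫⁻ b, ∫⁻ c, F a b c := by
  apply lintegral_congr
  intro a
  rw [lsw]
  exact h.comp (by fun_prop : Measurable fun z : ℝ × ℝ => (a, z.2, z.1))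

theorem perm_out {F : ℝ → ℝ → ℝ → ℝ≥0∞} (h : Measurable fun z : ℝ × ℝ × ℝ => F z.1 z.2.1 z.2.2) :
    ∫⁻ a, ∫⁻ b, ∫⁻ c, F b a c = ∫⁻ a, ∫⁻ b, ∫⁻ c, F a b c := by
  rw [lsw]
  have : Measurable fun z : (ℝ × ℝ) × ℝ => F z.1.2 z.1.1 z.2 :=
    h.comp (by fun_prop : Measurable fun z : (ℝ × ℝ) × ℝ => (z.1.2, z.1.1, z.2))
  fun_prop

theorem tri_add (F : ℝ → ℝ → ℝ → ℝ≥0∞) {H : ℝ → ℝ → ℝ → ℝ≥0∞}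
    (h : Measurable fun z : (ℝ × ℝ) × ℝ => H z.1.1 z.1.2 z.2) :
    ∫⁻ a, ∫⁻ b, ∫⁻ c, (F a b c + H a b c) =
      (∫⁻ a, ∫⁻ b, ∫⁻ c, F a b c) + ∫⁻ a, ∫⁻ b, ∫⁻ c, H a b c := by
  have m2 : Measurable fun z : ℝ × ℝ => ∫⁻ c, H z.1 z.2 c := Measurable.lintegral_prod_right' h
  have m1 : Measurable fun a => ∫⁻ b, ∫⁻ c, H a b c := Measurable.lintegral_prod_right' m2
  rw [← lintegral_add_right _ m1]
  apply lintegral_congr; intro a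
  rw [← lintegral_add_right _ (show Measurable fun b => ∫⁻ c, H a b c from m2.comp (by fun_prop : Measurable fun b => (a, b)))]
  apply lintegral_congr; intro b
  rw [← lintegral_add_right _ (show Measurable fun c => H a b c from h.comp (by fun_prop : Measurable fun c => ((a, b), c)))]

theorem six_cover (a b c : ℝ) :
    1 ≤ lei |a - c| (|a - b| / 2) + lei |a - b| (|a - c| / 2) + lei |b - c| (|b - a| / 2)
      + lei |b - a| (|b - c| / 2) + lei |c - b| (|c - a| / 2) + lei |c - a| (|c - b| / 2) := by
  have h : |a - c| ≤ |a - b| / 2 ∨ |a - b| ≤ |a - c| / 2 ∨ |b - c| ≤ |b - a| / 2 ∨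
      |b - a| ≤ |b - c| / 2 ∨ |c - b| ≤ |c - a| / 2 ∨ |c - a| ≤ |c - b| / 2 := by
    by_contra hcon
    push Not at hcon
    obtain ⟨h1, h2, h3, h4, h5, h6⟩ := hcon
    rw [abs_sub_comm b a] at *
    rw [abs_sub_comm c a] at *
    rw [abs_sub_comm c b] at *
    rcases abs_cases (a - b) with ⟨e1, _⟩ | ⟨e1, _⟩ <;> rcases abs_cases (a - c) with ⟨e2, _⟩ | ⟨e2, _⟩ <;>
      rcases abs_cases (b - c) with ⟨e3, _⟩ | ⟨e3, _⟩ <;> linarith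
  rcases h with h | h | h | h | h | h
  · rw [lei_of_le h]
    exact le_add_right (le_add_right (le_add_right (le_add_right (le_add_right le_rfl))))
  · rw [lei_of_le h]
    exact le_add_right (le_add_right (le_add_right (le_add_right le_add_self)))
  · rw [lei_of_le h]
    exact le_add_right (le_add_right (le_add_right le_add_self))
  · rw [lei_of_le h]
    exact le_add_right (le_add_right le_add_self)
  · rw [lei_of_le h]
    exact le_add_right le_add_self
  · rw [lei_of_le h]
    exact le_add_self

theorem stepA (e : ℝ → ℝ≥0∞) (he : Measurable e) (he1 : ∀ x, e x ≤ 1) (y : ℝ) (hy : 0 < y)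
    (hV : ∫⁻ x, e x = ENNReal.ofReal y) :
    ENNReal.ofReal (y ^ 3) ≤ 12 * ∫⁻ t, ∫⁻ s, ∫⁻ τ,
      e t * e s * e τ * lei |t - τ| (|t - s| / 2) * lei (y / 24) |t - s| := by
  set f : ℝ → ℝ → ℝ → ℝ≥0∞ := fun t s τ => e t * e s * e τ * lei |t - τ| (|t - s| / 2) with hf
  have hfm : Measurable fun z : ℝ × ℝ × ℝ => f z.1 z.2.1 z.2.2 := by simp only [hf]; fun_prop
  set I := ∫⁻ t, ∫⁻ s, ∫⁻ τ, f t s τ with hI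
  have p1 : ∫⁻ a, ∫⁻ b, ∫⁻ c, f a c b = I := perm_in hfm
  have p2 : ∫⁻ a, ∫⁻ b, ∫⁻ c, f b a c = I := perm_out hfm
  have p3 : ∫⁻ a, ∫⁻ b, ∫⁻ c, f b c a = I := by
    rw [← p1]; exact perm_out (F := fun a b c => f a c b) (by simp only [hf]; fun_prop)
  have p4 : ∫⁻ a, ∫⁻ b, ∫⁻ c, f c a b = I := by
    rw [← p2]; exact perm_in (F := fun a b c => f b a c) (by simp only [hf]; fun_prop)
  have p5 : ∫⁻ a, ∫⁻ b, ∫⁻ c, f c b a = I := by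
    rw [← p4]; exact perm_out (F := fun a b c => f c a b) (by simp only [hf]; fun_prop)
  have h6 : ENNReal.ofReal (y ^ 3) ≤ 6 * I := by
    calc ENNReal.ofReal (y ^ 3) = ∫⁻ a, ∫⁻ b, ∫⁻ c, e a * e b * e c := by
          simp only [lintegral_const_mul _ he, hV]
          simp only [lintegral_mul_const' _ _ ENNReal.ofReal_ne_top, lintegral_const_mul _ he, hV]
          rw [ENNReal.ofReal_pow hy.le]; ring
      _ ≤ ∫⁻ a, ∫⁻ b, ∫⁻ c, (f a b c + f a c b + f b a c + f b c a + f c a b + f c b a) := by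
          apply lintegral_mono; intro a; apply lintegral_mono; intro b; apply lintegral_mono; intro c
          simp only [hf]
          calc e a * e b * e c = e a * e b * e c * 1 := by ring
            _ ≤ _ := mul_le_mul_right (six_cover a b c) _
            _ = _ := by ring
      _ = I + I + I + I + I + I := by
          rw [tri_add _ (by simp only [hf]; fun_prop), tri_add _ (by simp only [hf]; fun_prop),
            tri_add _ (by simp only [hf]; fun_prop), tri_add _ (by simp only [hf]; fun_prop),
            tri_add _ (by simp only [hf]; fun_prop), p1, p2, p3, p4, p5]
      _ = 6 * I := by ring
  have hI2 : I ≤ (∫⁻ t, ∫⁻ s, ∫⁻ τ, f t s τ * lei (y / 24) |t - s|) + ENNReal.ofReal (y ^ 3 / 12) := by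
    have e1 : ∫⁻ t, ∫⁻ s, ∫⁻ τ, e t * lei |t - s| (y / 24) * e τ = ENNReal.ofReal (y ^ 3 / 12) := by
      simp only [lintegral_const_mul _ he, hV]
      simp only [lintegral_mul_const' _ _ ENNReal.ofReal_ne_top]
      have : ∀ t, ∫⁻ s, e t * lei |t - s| (y / 24) = e t * ENNReal.ofReal (2 * (y / 24)) := by
        intro t
        rw [lintegral_const_mul _ (by fun_prop), lint_ball]
      simp only [this]
      rw [lintegral_mul_const _ he, hV, ← ENNReal.ofReal_mul hy.le, ← ENNReal.ofReal_mul (by positivity)]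
      congr 1; ring
    rw [← e1, ← lintegral_add_right _ (by fun_prop)]
    apply lintegral_mono; intro t; simp only
    rw [← lintegral_add_right _ (by fun_prop)]
    apply lintegral_mono; intro s; simp only
    rw [← lintegral_add_right _ (by fun_prop)]
    apply lintegral_mono; intro τ; simp only
    by_cases h : y / 24 ≤ |t - s|
    · rw [lei_of_le h, mul_one]; exact le_self_add
    · rw [lei_of_le (not_le.1 h).le]
      apply le_add_left
      simp only [hf]
      calc e t * e s * e τ * lei |t - τ| (|t - s| / 2) ≤ e t * 1 * e τ * 1 := by
            gcongr
            · exact he1 s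
            · exact lei_le_one _ _
        _ = _ := by ring
  have h7 : ENNReal.ofReal (y ^ 3 / 2) + ENNReal.ofReal (y ^ 3 / 2) ≤
      6 * (∫⁻ t, ∫⁻ s, ∫⁻ τ, f t s τ * lei (y / 24) |t - s|) + ENNReal.ofReal (y ^ 3 / 2) := by
    rw [← ENNReal.ofReal_add (by positivity) (by positivity), add_halves]
    refine h6.trans ((mul_le_mul_right hI2 6).trans ?_)
    rw [mul_add]
    gcongr
    rw [show (6:ℝ≥0∞) = ENNReal.ofReal 6 by simp, ← ENNReal.ofReal_mul (by norm_num)]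
    apply le_of_eq; congr 1; ring
  have h8 := (ENNReal.add_le_add_iff_right ENNReal.ofReal_ne_top).1 h7
  calc ENNReal.ofReal (y ^ 3) = 2 * ENNReal.ofReal (y ^ 3 / 2) := by
        rw [show (2:ℝ≥0∞) = ENNReal.ofReal 2 by simp, ← ENNReal.ofReal_mul (by norm_num)]
        congr 1; ring
    _ ≤ 2 * (6 * (∫⁻ t, ∫⁻ s, ∫⁻ τ, f t s τ * lei (y / 24) |t - s|)) := by gcongr
    _ = _ := by rw [← mul_assoc]; norm_num [hf]

theorem stepB (e : ℝ → ℝ≥0∞) (t s : ℝ) (h : t - s ≠ 0) :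
    ∫⁻ τ, e τ * lei |t - τ| (|t - s| / 2) =
      ENNReal.ofReal |t - s| * ∫⁻ ρ, e (t - ρ * (t - s)) * lei |ρ| (1 / 2) := by
  rw [← lint_affine1 (fun τ => e τ * lei |t - τ| (|t - s| / 2)) (-(t - s)) (neg_ne_zero.2 h) t, abs_neg]
  congr 1
  apply lintegral_congr
  intro ρ
  have e1 : -(t - s) * ρ + t = t - ρ * (t - s) := by ring
  rw [e1]
  congr 1
  have e2 : |t - (t - ρ * (t - s))| = |ρ| * |t - s| := by rw [← abs_mul]; congr 1; ring
  rw [e2]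
  have : 0 < |t - s| := abs_pos.2 h
  unfold lei
  congr 1
  simp only [eq_iff_iff]
  constructor
  · intro h; by_contra hc; push Not at hc; nlinarith
  · intro h; nlinarith

theorem stepC (y t s : ℝ) : lei (y / 24) |t - s| * ENNReal.ofReal |t - s| ≤
    17 * ∫⁻ c, lei |s - c| (|t - c| / 32) * lei (y / 25) |t - c| := by
  by_cases h : y / 24 ≤ |t - s|
  · rw [lei_of_le h, one_mul]
    calc ENNReal.ofReal |t - s| ≤ 17 * ENNReal.ofReal (2 * (|t - s| / 33)) := by
          rw [show (17:ℝ≥0∞) = ENNReal.ofReal 17 by simp, ← ENNReal.ofReal_mul (by norm_num)]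
          apply ENNReal.ofReal_le_ofReal
          have := abs_nonneg (t - s); linarith
      _ = 17 * ∫⁻ c, lei |s - c| (|t - s| / 33) := by rw [lint_ball]
      _ ≤ _ := by
        gcongr with c
        by_cases hc : |s - c| ≤ |t - s| / 33
        · have h1 : |t - s| ≤ |t - c| + |s - c| := by
            rw [abs_sub_comm s c]; exact abs_sub_le t c s
          have h0 := abs_nonneg (t - s)
          rw [lei_of_le (show |s - c| ≤ |t - c| / 32 by linarith),
            lei_of_le (show y / 25 ≤ |t - c| by linarith)]
          simpa using lei_le_one _ _
        · rw [lei_of_lt (not_le.1 hc)]; exact zero_le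
  · rw [lei_of_lt (not_le.1 h), zero_mul]; exact zero_le

theorem stepE (β : ℝ) (hβ : 0 < β) (g : ℝ → ℝ≥0∞) (hg : Measurable g) (hg1 : ∀ x, g x ≤ 1)
    (hfin : ∫⁻ x, g x ≠ ∞) (θ : ℝ) (hθ : 0 < θ) :
    ∫⁻ x, g x ≤ ENNReal.ofReal θ + ENNReal.ofReal (2 * 4 ^ β * θ ^ (-1 - β)) *
      ∫⁻ s, ∫⁻ u, g s * g u * ENNReal.ofReal (|u - s| ^ β) := by
  by_cases hm : ∫⁻ x, g x ≤ ENNReal.ofReal θ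
  · exact le_add_right hm
  push Not at hm
  apply le_add_left
  set μ := (∫⁻ x, g x).toReal with hμ
  have hmu : ∫⁻ x, g x = ENNReal.ofReal μ := (ENNReal.ofReal_toReal hfin).symm
  have hθμ : θ < μ := by
    rw [hmu] at hm
    exact (ENNReal.ofReal_lt_ofReal_iff_of_nonneg hθ.le).1 hm
  have hμ0 : 0 < μ := by linarith
  have h1 : ∀ s, ENNReal.ofReal (μ / 2) ≤ ∫⁻ u, g u * lei (μ / 4) |u - s| := by
    intro s
    have : ENNReal.ofReal (μ / 2) + ENNReal.ofReal (μ / 2) ≤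
        ENNReal.ofReal (μ / 2) + ∫⁻ u, g u * lei (μ / 4) |u - s| := by
      rw [← ENNReal.ofReal_add (by positivity) (by positivity), add_halves, ← hmu]
      rw [show μ / 2 = 2 * (μ / 4) by ring, ← lint_ball s, ← lintegral_add_right _ (by fun_prop)]
      gcongr with u
      by_cases h : μ / 4 ≤ |u - s|
      · rw [lei_of_le h, mul_one]; exact le_add_self
      · rw [abs_sub_comm s u, lei_of_le (not_le.1 h).le]
        exact le_add_right (hg1 u)
    exact (ENNReal.add_le_add_iff_left ENNReal.ofReal_ne_top).1 this
  have h2 : ∀ s, ENNReal.ofReal ((μ / 4) ^ β * (μ / 2)) ≤ ∫⁻ u, g u * ENNReal.ofReal (|u - s| ^ β) := by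
    intro s
    rw [ENNReal.ofReal_mul (by positivity)]
    refine (mul_le_mul_right (h1 s) _).trans ?_
    rw [← lintegral_const_mul _ (by fun_prop)]
    apply lintegral_mono; intro u; simp only
    by_cases h : μ / 4 ≤ |u - s|
    · rw [lei_of_le h, mul_one, mul_comm]
      gcongr
    · rw [lei_of_lt (not_le.1 h)]; simp
  have h3 : ENNReal.ofReal μ * ENNReal.ofReal ((μ / 4) ^ β * (μ / 2)) ≤
      ∫⁻ s, ∫⁻ u, g s * g u * ENNReal.ofReal (|u - s| ^ β) := by
    rw [← hmu, ← lintegral_mul_const _ hg]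
    gcongr with s
    refine (mul_le_mul_right (h2 s) _).trans ?_
    rw [← lintegral_const_mul _ (by fun_prop)]
    apply le_of_eq
    apply lintegral_congr
    intro u; ring
  rw [hmu]
  refine le_trans ?_ (mul_le_mul_right h3 _)
  rw [← ENNReal.ofReal_mul hμ0.le, ← ENNReal.ofReal_mul (by positivity)]
  apply ENNReal.ofReal_le_ofReal
  have e1 : (μ / 4) ^ β = μ ^ β / 4 ^ β := Real.div_rpow hμ0.le (by norm_num) _
  have e2 : θ ^ (-1 - β) * (μ ^ β * μ) ≥ 1 := by
    have : μ ^ (1 + β) = μ ^ β * μ := by rw [Real.rpow_add hμ0, Real.rpow_one]; ring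
    rw [← this, show -1 - β = -(1 + β) by ring, Real.rpow_neg hθ.le]
    have h4 : θ ^ (1 + β) ≤ μ ^ (1 + β) := Real.rpow_le_rpow hθ.le hθμ.le (by linarith)
    have h5 : 0 < θ ^ (1 + β) := by positivity
    rw [inv_mul_eq_div, ge_iff_le, le_div_iff₀ h5]; linarith
  have e3 : 2 * (4:ℝ) ^ β * θ ^ (-1 - β) * (μ * ((μ / 4) ^ β * (μ / 2))) = μ * (θ ^ (-1 - β) * (μ ^ β * μ)) := by
    rw [e1]; field_simp
  rw [e3]; nlinarith

theorem stepF (a : ℝ) (ha : 0 ≤ a) (t s u : ℝ) :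
    ∫⁻ c, lei |s - c| (|t - c| / 32) * lei |u - c| (|t - c| / 32) * ENNReal.ofReal (|t - c| ^ a)
      ≤ lei |u - s| (|t - s| / 8) * ENNReal.ofReal (2 ^ a * |t - s| ^ (a + 1)) := by
  have h0 := abs_nonneg (t - s)
  calc _ ≤ ∫⁻ c, (lei |u - s| (|t - s| / 8) * ENNReal.ofReal ((2 * |t - s|) ^ a)) * lei |s - c| (|t - s| / 31) := by
        apply lintegral_mono; intro c; simp only
        by_cases h1 : |s - c| ≤ |t - c| / 32
        · by_cases h2 : |u - c| ≤ |t - c| / 32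
          · have h3 : |t - c| ≤ |t - s| + |s - c| := abs_sub_le t s c
            have h4 : |u - s| ≤ |u - c| + |s - c| := by
              rw [abs_sub_comm s c]; exact abs_sub_le u c s
            rw [lei_of_le (show |u - s| ≤ |t - s| / 8 by linarith),
              lei_of_le (show |s - c| ≤ |t - s| / 31 by linarith)]
            rw [one_mul, mul_one]
            calc _ ≤ 1 * 1 * ENNReal.ofReal (|t - c| ^ a) := by
                  gcongr <;> exact lei_le_one _ _
              _ = ENNReal.ofReal (|t - c| ^ a) := by ring
              _ ≤ _ := by
                gcongr
                linarith
          · rw [lei_of_lt (not_le.1 h2)]; simp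
        · rw [lei_of_lt (not_le.1 h1)]; simp
    _ = lei |u - s| (|t - s| / 8) * (ENNReal.ofReal ((2 * |t - s|) ^ a) * ENNReal.ofReal (2 * (|t - s| / 31))) := by
        rw [lintegral_const_mul _ (by fun_prop), lint_ball]; ring
    _ ≤ _ := by
        gcongr
        rw [← ENNReal.ofReal_mul (by positivity)]
        apply ENNReal.ofReal_le_ofReal
        rw [Real.mul_rpow (by norm_num) h0]
        rcases h0.eq_or_lt with h | h
        · rw [← h]; simp; positivity
        · rw [Real.rpow_add h, Real.rpow_one]
          have : 0 ≤ 2 ^ a * |t - s| ^ a := by positivity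
          nlinarith


def sg (e : ℝ → ℝ≥0∞) (t ρ c s : ℝ) : ℝ≥0∞ := e s * e (t - ρ * (t - s)) * lei |s - c| (|t - c| / 32)

theorem oneD_P1 (e : ℝ → ℝ≥0∞) (he : Measurable e) (he1 : ∀ x, e x ≤ 1) (y : ℝ) (hy : 0 < y)
    (hV : ∫⁻ x, e x = ENNReal.ofReal y) :
    ENNReal.ofReal (y ^ 3) ≤ 204 * ∫⁻ t, ∫⁻ ρ, ∫⁻ c,
      e t * lei |ρ| (1 / 2) * lei (y / 25) |t - c| * ∫⁻ s, sg e t ρ c s := by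
  have h1 : ∀ t s, ∫⁻ τ, e t * e s * e τ * lei |t - τ| (|t - s| / 2) * lei (y / 24) |t - s|
      ≤ 17 * ∫⁻ ρ, ∫⁻ c, e t * lei |ρ| (1 / 2) * lei (y / 25) |t - c| * sg e t ρ c s := by
    intro t s
    have e1 : ∫⁻ τ, e t * e s * e τ * lei |t - τ| (|t - s| / 2) * lei (y / 24) |t - s|
        = e t * e s * lei (y / 24) |t - s| * ∫⁻ τ, e τ * lei |t - τ| (|t - s| / 2) := by
      rw [← lintegral_const_mul _ (by fun_prop)]
      apply lintegral_congr; intro τ; ring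
    rw [e1]
    by_cases hts : t - s = 0
    · rw [hts, abs_zero, lei_of_lt (by linarith)]; simp
    · rw [stepB e t s hts]
      calc _ = e t * e s * (lei (y / 24) |t - s| * ENNReal.ofReal |t - s|) *
              ∫⁻ ρ, e (t - ρ * (t - s)) * lei |ρ| (1 / 2) := by ring
        _ ≤ e t * e s * (17 * ∫⁻ c, lei |s - c| (|t - c| / 32) * lei (y / 25) |t - c|) *
              ∫⁻ ρ, e (t - ρ * (t - s)) * lei |ρ| (1 / 2) := by
            exact mul_le_mul_left (mul_le_mul_right (stepC y t s) _) _
        _ = 17 * (e t * e s * ((∫⁻ ρ, e (t - ρ * (t - s)) * lei |ρ| (1 / 2)) *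
              ∫⁻ c, lei |s - c| (|t - c| / 32) * lei (y / 25) |t - c|)) := by ring
        _ = _ := by
            congr 1
            rw [← lintegral_mul_const _ (by fun_prop), ← lintegral_const_mul _ (by fun_prop)]
            apply lintegral_congr; intro ρ
            rw [← lintegral_const_mul _ (by fun_prop), ← lintegral_const_mul _ (by fun_prop)]
            apply lintegral_congr; intro c
            unfold sg; ring
  refine (stepA e he he1 y hy hV).trans ?_
  calc _ ≤ 12 * ∫⁻ t, ∫⁻ s, 17 * ∫⁻ ρ, ∫⁻ c, e t * lei |ρ| (1 / 2) * lei (y / 25) |t - c| * sg e t ρ c s :=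
        mul_le_mul_right (lintegral_mono fun t => lintegral_mono fun s => h1 t s) _
    _ = 204 * ∫⁻ t, ∫⁻ s, ∫⁻ ρ, ∫⁻ c, e t * lei |ρ| (1 / 2) * lei (y / 25) |t - c| * sg e t ρ c s := by
        simp only [lintegral_const_mul' _ _ (show (17:ℝ≥0∞) ≠ ∞ by simp)]
        rw [← mul_assoc]; norm_num
    _ = _ := by
        congr 1
        apply lintegral_congr; intro t
        rw [lsw (by unfold sg; fun_prop)]
        apply lintegral_congr; intro ρ
        rw [lsw (by unfold sg; fun_prop)]
        apply lintegral_congr; intro c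
        rw [lintegral_const_mul _ (by unfold sg; fun_prop)]

theorem oneD_P3 (β : ℝ) (hβ : 0 < β) (e : ℝ → ℝ≥0∞) (he : Measurable e) :
    ∫⁻ t, ∫⁻ ρ, ∫⁻ c, e t * lei |ρ| (1 / 2) * ENNReal.ofReal (|ρ| ^ β * |t - c| ^ (3 * β + 1)) *
      ∫⁻ s, ∫⁻ u, sg e t ρ c s * sg e t ρ c u * ENNReal.ofReal (|u - s| ^ β)
    ≤ ENNReal.ofReal (2 ^ (3 * β + 1)) * ∫⁻ t, ∫⁻ ρ, ∫⁻ s, ∫⁻ u,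
      e t * e s * e u * e (t - ρ * (t - s)) * e (t - ρ * (t - u)) *
      (lei |ρ| (1 / 2) * lei |u - s| (|t - s| / 8) *
        ENNReal.ofReal (|u - s| ^ β * |ρ| ^ β * |t - s| ^ (3 * β + 2))) := by
  simp only [← lintegral_const_mul' _ _ ENNReal.ofReal_ne_top]
  apply lintegral_mono; intro t; apply lintegral_mono; intro ρ; simp only
  calc _ = ∫⁻ c, ∫⁻ s, ∫⁻ u, e t * lei |ρ| (1 / 2) * ENNReal.ofReal (|ρ| ^ β * |t - c| ^ (3 * β + 1)) *
      (sg e t ρ c s * sg e t ρ c u * ENNReal.ofReal (|u - s| ^ β)) := by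
        apply lintegral_congr; intro c
        rw [← lintegral_const_mul _ (by unfold sg; fun_prop)]
        apply lintegral_congr; intro s
        rw [← lintegral_const_mul _ (by unfold sg; fun_prop)]
    _ = ∫⁻ s, ∫⁻ u, ∫⁻ c, e t * lei |ρ| (1 / 2) * ENNReal.ofReal (|ρ| ^ β * |t - c| ^ (3 * β + 1)) *
      (sg e t ρ c s * sg e t ρ c u * ENNReal.ofReal (|u - s| ^ β)) := by
        rw [lsw (by unfold sg; fun_prop)]
        apply lintegral_congr; intro s
        rw [lsw (by unfold sg; fun_prop)]
    _ ≤ _ := by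
        apply lintegral_mono; intro s; apply lintegral_mono; intro u; simp only
        calc _ = (e t * e s * e u * e (t - ρ * (t - s)) * e (t - ρ * (t - u)) *
              lei |ρ| (1 / 2) * ENNReal.ofReal (|u - s| ^ β * |ρ| ^ β)) *
              ∫⁻ c, lei |s - c| (|t - c| / 32) * lei |u - c| (|t - c| / 32) *
                ENNReal.ofReal (|t - c| ^ (3 * β + 1)) := by
              rw [← lintegral_const_mul _ (by fun_prop)]
              apply lintegral_congr; intro c
              unfold sg
              rw [ENNReal.ofReal_mul (by positivity), ENNReal.ofReal_mul (by positivity)]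
              ring
          _ ≤ (e t * e s * e u * e (t - ρ * (t - s)) * e (t - ρ * (t - u)) *
              lei |ρ| (1 / 2) * ENNReal.ofReal (|u - s| ^ β * |ρ| ^ β)) *
              (lei |u - s| (|t - s| / 8) * ENNReal.ofReal (2 ^ (3 * β + 1) * |t - s| ^ (3 * β + 1 + 1))) := by
              gcongr; exact stepF _ (by positivity) t s u
          _ = _ := by
              rw [ENNReal.ofReal_mul (p := 2 ^ (3 * β + 1)) (by positivity),
                ENNReal.ofReal_mul (p := |u - s| ^ β * |ρ| ^ β) (by positivity),
                show 3 * β + 1 + 1 = 3 * β + 2 by ring]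
              ring

theorem oneD_P2 (β : ℝ) (hβ : 0 < β) (e : ℝ → ℝ≥0∞) (he : Measurable e) (he1 : ∀ x, e x ≤ 1)
    (y : ℝ) (hy : 0 < y) (hV : ∫⁻ x, e x = ENNReal.ofReal y) (δ : ℝ) (hδ : 0 < δ) (t ρ c : ℝ) (hρ : ρ ≠ 0) :
    e t * lei |ρ| (1 / 2) * lei (y / 25) |t - c| * ∫⁻ s, sg e t ρ c s ≤
      e t * (lei |ρ| (1 / 2) * ENNReal.ofReal (δ * |ρ| ^ (-1 + 1 / (1 + β)))) *
        (lei (y / 25) |t - c| * ENNReal.ofReal (|t - c| ^ (-1 - 2 * β / (1 + β)))) +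
      ENNReal.ofReal (2 * 4 ^ β * δ ^ (-1 - β)) *
        (e t * lei |ρ| (1 / 2) * ENNReal.ofReal (|ρ| ^ β * |t - c| ^ (3 * β + 1)) *
      ∫⁻ s, ∫⁻ u, sg e t ρ c s * sg e t ρ c u * ENNReal.ofReal (|u - s| ^ β)) := by
  by_cases htc : y / 25 ≤ |t - c|
  swap
  · rw [lei_of_lt (not_le.1 htc)]; simp
  rw [lei_of_le htc]
  have hr : 0 < |ρ| := abs_pos.2 hρ
  have hd : 0 < |t - c| := lt_of_lt_of_le (by positivity) htc
  have sle : ∀ s, sg e t ρ c s ≤ e s := by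
    intro s
    calc sg e t ρ c s ≤ e s * 1 * 1 := by
          unfold sg; gcongr
          · exact he1 _
          · exact lei_le_one _ _
      _ = e s := by ring
  have hfin : ∫⁻ s, sg e t ρ c s ≠ ∞ := by
    refine ne_top_of_le_ne_top ?_ (lintegral_mono sle)
    rw [hV]; exact ENNReal.ofReal_ne_top
  have h := stepE β hβ (sg e t ρ c) (by unfold sg; fun_prop) (fun s => (sle s).trans (he1 s)) hfin
    (δ * |ρ| ^ (-1 + 1 / (1 + β)) * |t - c| ^ (-1 - 2 * β / (1 + β))) (by positivity)
  have hb : 1 + β ≠ 0 := by positivity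
  have eθ : (δ * |ρ| ^ (-1 + 1 / (1 + β)) * |t - c| ^ (-1 - 2 * β / (1 + β))) ^ (-1 - β)
      = δ ^ (-1 - β) * (|ρ| ^ β * |t - c| ^ (3 * β + 1)) := by
    rw [Real.mul_rpow (by positivity) (by positivity), Real.mul_rpow (by positivity) (by positivity),
      ← Real.rpow_mul hr.le, ← Real.rpow_mul hd.le, mul_assoc]
    congr 3
    · field_simp; ring
    · field_simp; ring
  rw [eθ] at h
  calc _ ≤ e t * lei |ρ| (1 / 2) * 1 * _ := mul_le_mul_right h _
    _ = _ := by
      rw [ENNReal.ofReal_mul (p := δ * |ρ| ^ (-1 + 1 / (1 + β))) (by positivity), ← mul_assoc (2 * 4 ^ β),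
        ENNReal.ofReal_mul (p := 2 * 4 ^ β * δ ^ (-1 - β)) (by positivity)]
      ring

theorem oneD (β : ℝ) (hβ : 0 < β) : ∃ K : ℝ, 0 < K ∧ ∀ (e : ℝ → ℝ≥0∞), Measurable e → (∀ x, e x ≤ 1) →
    ∀ y : ℝ, 0 < y → ∫⁻ x, e x = ENNReal.ofReal y →
    ENNReal.ofReal (y ^ (5 + 4 * β)) ≤ ENNReal.ofReal K * ∫⁻ t, ∫⁻ ρ, ∫⁻ s, ∫⁻ u,
      e t * e s * e u * e (t - ρ * (t - s)) * e (t - ρ * (t - u)) *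
      (lei |ρ| (1 / 2) * lei |u - s| (|t - s| / 8) *
        ENNReal.ofReal (|u - s| ^ β * |ρ| ^ β * |t - s| ^ (3 * β + 2))) := by
  obtain ⟨Kr, hKr, hKr'⟩ := int_near (1 / (1 + β)) (by positivity)
  set κ := 2 * β / (1 + β) with hκ
  have hκ0 : 0 < κ := by positivity
  set c0 : ℝ := 1 / (408 * Kr * (2 / κ) * 25 ^ κ) with hc0
  have hc0' : 0 < c0 := by positivity
  refine ⟨2 * 204 * (2 * 4 ^ β * c0 ^ (-1 - β)) * 2 ^ (3 * β + 1), by positivity, ?_⟩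
  intro e he he1 y hy hV
  set L := ∫⁻ t, ∫⁻ ρ, ∫⁻ s, ∫⁻ u,
      e t * e s * e u * e (t - ρ * (t - s)) * e (t - ρ * (t - u)) *
      (lei |ρ| (1 / 2) * lei |u - s| (|t - s| / 8) *
        ENNReal.ofReal (|u - s| ^ β * |ρ| ^ β * |t - s| ^ (3 * β + 2))) with hL
  set δ : ℝ := c0 * y ^ (2 + κ) with hδ
  have hδ0 : 0 < δ := by positivity
  have aeρ : ∀ᵐ ρ : ℝ, ρ ≠ 0 := Measure.ae_ne volume 0
  have B1 : ∫⁻ t, ∫⁻ ρ, ∫⁻ c, e t * (lei |ρ| (1 / 2) * ENNReal.ofReal (δ * |ρ| ^ (-1 + 1 / (1 + β)))) *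
        (lei (y / 25) |t - c| * ENNReal.ofReal (|t - c| ^ (-1 - κ))) ≤
        ENNReal.ofReal (y * (δ * Kr) * (2 / κ * (y / 25) ^ (-κ))) := by
    calc _ ≤ ∫⁻ t, ∫⁻ ρ, e t * (lei |ρ| (1 / 2) * ENNReal.ofReal (δ * |ρ| ^ (-1 + 1 / (1 + β)))) *
        ENNReal.ofReal (2 / κ * (y / 25) ^ (-κ)) := by
          apply lintegral_mono; intro t; apply lintegral_mono; intro ρ; simp only
          rw [lintegral_const_mul _ (by fun_prop)]
          exact mul_le_mul_right (int_far κ hκ0 (y / 25) (by positivity) t) _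
      _ = ENNReal.ofReal y * (∫⁻ ρ, lei |ρ| (1 / 2) * ENNReal.ofReal (δ * |ρ| ^ (-1 + 1 / (1 + β)))) *
        ENNReal.ofReal (2 / κ * (y / 25) ^ (-κ)) := by
          simp only [lintegral_mul_const' _ _ ENNReal.ofReal_ne_top]
          congr 1
          rw [← hV, ← lintegral_mul_const _ he]
          apply lintegral_congr; intro t
          rw [lintegral_const_mul _ (by fun_prop)]
      _ ≤ ENNReal.ofReal y * (ENNReal.ofReal δ * ENNReal.ofReal Kr) *
        ENNReal.ofReal (2 / κ * (y / 25) ^ (-κ)) := by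
          gcongr
          refine le_trans ?_ (mul_le_mul_right (hKr' 0) _)
          rw [← lintegral_const_mul _ (by fun_prop)]
          apply lintegral_mono; intro ρ; simp only [sub_zero]
          by_cases h : |ρ| ≤ 1 / 2
          · rw [lei_of_le h, lei_of_le (by linarith), ENNReal.ofReal_mul hδ0.le, one_mul, one_mul]
          · rw [lei_of_lt (not_le.1 h)]; simp
      _ = _ := by
          rw [← ENNReal.ofReal_mul hδ0.le, ← ENNReal.ofReal_mul hy.le, ← ENNReal.ofReal_mul (by positivity)]
  have B2 : ENNReal.ofReal (y ^ 3) ≤ 204 * (ENNReal.ofReal (y * (δ * Kr) * (2 / κ * (y / 25) ^ (-κ))) +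
      ENNReal.ofReal (2 * 4 ^ β * δ ^ (-1 - β)) * (ENNReal.ofReal (2 ^ (3 * β + 1)) * L)) := by
    refine (oneD_P1 e he he1 y hy hV).trans (mul_le_mul_right ?_ _)
    calc _ ≤ ∫⁻ t, ∫⁻ ρ, ∫⁻ c, (e t * (lei |ρ| (1 / 2) * ENNReal.ofReal (δ * |ρ| ^ (-1 + 1 / (1 + β)))) *
        (lei (y / 25) |t - c| * ENNReal.ofReal (|t - c| ^ (-1 - κ))) +
      ENNReal.ofReal (2 * 4 ^ β * δ ^ (-1 - β)) *
        (e t * lei |ρ| (1 / 2) * ENNReal.ofReal (|ρ| ^ β * |t - c| ^ (3 * β + 1)) *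
      ∫⁻ s, ∫⁻ u, sg e t ρ c s * sg e t ρ c u * ENNReal.ofReal (|u - s| ^ β))) := by
          apply lintegral_mono; intro t
          apply lintegral_mono_ae
          filter_upwards [aeρ] with ρ hρ
          apply lintegral_mono; intro c
          exact oneD_P2 β hβ e he he1 y hy hV δ hδ0 t ρ c hρ
      _ ≤ _ := by
          rw [tri_add _ (by unfold sg; fun_prop)]
          refine add_le_add B1 ?_
          simp only [lintegral_const_mul' _ _ ENNReal.ofReal_ne_top]
          exact mul_le_mul_right (oneD_P3 β hβ e he) _
  have E1 : 204 * (y * (δ * Kr) * (2 / κ * (y / 25) ^ (-κ))) = y ^ 3 / 2 := by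
    rw [hδ, Real.rpow_add hy, Real.div_rpow hy.le (by norm_num), Real.rpow_neg hy.le,
      Real.rpow_neg (by norm_num), hc0]
    have : 0 < y ^ κ := by positivity
    have h25 : (0:ℝ) < 25 ^ κ := by positivity
    rw [Real.rpow_two]
    field_simp
    norm_num
  have B3 : ENNReal.ofReal (y ^ 3 / 2) ≤
      ENNReal.ofReal (204 * (2 * 4 ^ β * δ ^ (-1 - β) * 2 ^ (3 * β + 1))) * L := by
    have : ENNReal.ofReal (y ^ 3 / 2) + ENNReal.ofReal (y ^ 3 / 2) ≤ ENNReal.ofReal (y ^ 3 / 2) +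
        ENNReal.ofReal (204 * (2 * 4 ^ β * δ ^ (-1 - β) * 2 ^ (3 * β + 1))) * L := by
      rw [← ENNReal.ofReal_add (by positivity) (by positivity), add_halves]
      refine B2.trans (le_of_eq ?_)
      rw [mul_add, show (204:ℝ≥0∞) = ENNReal.ofReal 204 by simp, ← ENNReal.ofReal_mul (by norm_num), E1,
        ENNReal.ofReal_mul (p := 204) (by norm_num), ENNReal.ofReal_mul (p := 2 * 4 ^ β * δ ^ (-1 - β)) (by positivity)]
      ring
    exact (ENNReal.add_le_add_iff_left ENNReal.ofReal_ne_top).1 this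
  have hb : 1 + β ≠ 0 := by positivity
  have E2 : δ ^ (-1 - β) = c0 ^ (-1 - β) * y ^ (-(2 + 4 * β)) := by
    rw [hδ, Real.mul_rpow hc0'.le (by positivity), ← Real.rpow_mul hy.le]
    congr 2
    rw [hκ]; field_simp; ring
  have E3 : y ^ (5 + 4 * β) = 2 * y ^ (2 + 4 * β) * (y ^ 3 / 2) := by
    rw [show 5 + 4 * β = (2 + 4 * β) + (3:ℕ) by push_cast; ring, Real.rpow_add hy, Real.rpow_natCast]; ring
  rw [E3, ENNReal.ofReal_mul (by positivity)]
  refine (mul_le_mul_right B3 _).trans (le_of_eq ?_)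
  rw [← mul_assoc, ← ENNReal.ofReal_mul (by positivity)]
  congr 2
  rw [E2, Real.rpow_neg hy.le]
  have : 0 < y ^ (2 + 4 * β) := by positivity
  field_simp


/-- singular kernel -/
def kk (a x : ℝ) : ℝ≥0∞ := lei |x| 1 * ENNReal.ofReal (|x| ^ (-1 + a))

@[fun_prop]
theorem measurable_kk {α : Type*} [MeasurableSpace α] (a : ℝ) {f : α → ℝ} (hf : Measurable f) :
    Measurable fun x => kk a (f x) := by unfold kk; fun_prop

theorem kk_symm (a x y : ℝ) : kk a (x - y) = kk a (y - x) := by unfold kk; rw [abs_sub_comm]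

theorem kk_int (η : ℝ) (hη : 0 < η) : ∃ K : ℝ, 0 < K ∧
    (∀ z : ℝ, ∫⁻ x, kk η (x - z) ≤ ENNReal.ofReal K) ∧ (∀ z : ℝ, ∫⁻ x, kk η (z - x) ≤ ENNReal.ofReal K) := by
  obtain ⟨K, hK, h⟩ := int_near η hη
  refine ⟨K, hK, h, fun z => ?_⟩
  simp only [kk_symm η z]
  exact h z

theorem kc_delta (s t u ρ : ℝ) (hρ : |ρ| ≤ 1 / 2) (hus : |u - s| ≤ |t - s| / 8) :
    |u - s| * |ρ| * |t - s| ^ 3 ≤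
      8 * (|u - s| * |t - s| * |ρ| * |t - u| * |1 - ρ| * |t - ρ * (t - u) - s|) := by
  have hD := abs_nonneg (t - s)
  have h1 : 7 / 8 * |t - s| ≤ |t - u| := by
    have := abs_sub_le t u s; linarith
  have h1' : |t - u| ≤ 9 / 8 * |t - s| := by
    have := abs_sub_le t s u; rw [abs_sub_comm s u] at this; linarith
  have h2 : 1 / 2 ≤ |1 - ρ| := by
    have := abs_sub_abs_le_abs_sub 1 ρ; rw [abs_one] at this; linarith
  have h3 : 7 / 16 * |t - s| ≤ |t - ρ * (t - u) - s| := by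
    have := abs_sub_abs_le_abs_sub (t - s) (ρ * (t - u))
    rw [abs_mul] at this
    have e : t - s - ρ * (t - u) = t - ρ * (t - u) - s := by ring
    rw [e] at this
    have : |ρ| * |t - u| ≤ 1 / 2 * (9 / 8 * |t - s|) := by gcongr
    linarith
  have h4 : 7 / 8 * |t - s| * (1 / 2) * (7 / 16 * |t - s|) ≤ |t - u| * |1 - ρ| * |t - ρ * (t - u) - s| := by
    gcongr
  have h5 : |t - s| ^ 2 ≤ 8 * (|t - u| * |1 - ρ| * |t - ρ * (t - u) - s|) := by nlinarith
  calc |u - s| * |ρ| * |t - s| ^ 3 = (|u - s| * |ρ| * |t - s|) * |t - s| ^ 2 := by ring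
    _ ≤ (|u - s| * |ρ| * |t - s|) * (8 * (|t - u| * |1 - ρ| * |t - ρ * (t - u) - s|)) := by gcongr
    _ = _ := by ring

theorem kc_pt {n : ℕ} (η β : ℝ) (hβ : β = n / 4 - 1 + η)
    (E : Set (Euc n × ℝ)) (hE : MeasurableSet E) (G : Set (Euc n × Euc n))
    (hG : MeasurableSet G) (M B : ℝ≥0∞) (hM : ∀ ξ, volume (Prod.mk ξ ⁻¹' G) ≤ M)
    (hB : ∀ a, volume (slice E a) ≤ B) (h01 : ∀ z ∈ E, z.2 ∈ Set.Ioc (0:ℝ) 1)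
    (s t u ρ : ℝ) (hρ : ρ ≠ 0) (hus : u ≠ s)
    (is : ∀ g ∈ G, (g.2 + s • g.1, s) ∈ E) (it : ∀ g ∈ G, (g.2 + t • g.1, t) ∈ E)
    (iu : ∀ g ∈ G, (g.2 + u • g.1, u) ∈ E)
    (i2 : ∀ g ∈ G, (g.2 + (t - ρ * (t - s)) • g.1, (t - ρ * (t - s))) ∈ E)
    (i3 : ∀ g ∈ G, (g.2 + (t - ρ * (t - u)) • g.1, (t - ρ * (t - u))) ∈ E) :
    volume G * (lei |ρ| (1 / 2) * lei |u - s| (|t - s| / 8) *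
        ENNReal.ofReal (|u - s| ^ β * |ρ| ^ β * |t - s| ^ (3 * β + 2))) ≤
      ENNReal.ofReal (8 ^ ((n:ℝ) / 4)) * (M * B ^ 3) ^ ((1:ℝ) / 4) *
      ((volume (slice E s) + volume (slice E t) + volume (slice E u)) *
        (kk η (u - s) * kk η ρ * kk (3 * η) (t - s))) := by
  by_cases h1 : |ρ| ≤ 1 / 2
  swap
  · rw [lei_of_lt (not_le.1 h1)]; simp
  by_cases h2 : |u - s| ≤ |t - s| / 8
  swap
  · rw [lei_of_lt (not_le.1 h2)]; simp
  rcases G.eq_empty_or_nonempty with hemp | ⟨g, hg⟩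
  · rw [hemp]; simp
  have s01 := h01 _ (is g hg)
  have t01 := h01 _ (it g hg)
  have u01 := h01 _ (iu g hg)
  simp only [Set.mem_Ioc] at s01 t01 u01
  rw [lei_of_le h1, lei_of_le h2, one_mul, one_mul]
  have hus' : 0 < |u - s| := abs_pos.2 (sub_ne_zero.2 hus)
  have hρ' : 0 < |ρ| := abs_pos.2 hρ
  have hts' : 0 < |t - s| := by linarith
  set Δ := |u - s| * |t - s| * |ρ| * |t - u| * |1 - ρ| * |t - ρ * (t - u) - s| with hΔ
  have hd := kc_delta s t u ρ h1 h2
  rw [← hΔ] at hd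
  have hΔ0 : 0 < Δ := by
    have : 0 < |u - s| * |ρ| * |t - s| ^ 3 := by positivity
    linarith
  have nz : t - u ≠ 0 ∧ 1 - ρ ≠ 0 ∧ t - ρ * (t - u) - s ≠ 0 := by
    refine ⟨?_, ?_, ?_⟩ <;>
    · intro h
      rw [hΔ, h] at hΔ0
      simp at hΔ0
  have F := ftl E hE G hG M hM s t u ρ (abs_pos.1 hts') (abs_pos.1 hus') nz.1 hρ nz.2.1 nz.2.2 is it iu i2 i3
  rw [← hΔ] at F
  set Sg := volume (slice E s) + volume (slice E t) + volume (slice E u) with hS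
  have F2 : ENNReal.ofReal (Δ ^ n) * volume G ^ 4 ≤ (M * B ^ 3) * Sg ^ 4 := by
    refine F.trans ?_
    calc _ ≤ M * (Sg ^ 2 * Sg * Sg * B * B ^ 2) := by
          have a1 : volume (slice E s) ≤ Sg := by rw [hS, add_assoc]; exact le_self_add
          have a2 : volume (slice E t) ≤ Sg := by rw [hS]; exact le_add_right le_add_self
          have a3 : volume (slice E u) ≤ Sg := by rw [hS]; exact le_add_self
          gcongr
          · exact hB _
          · exact hB _
      _ = _ := by ring
  have F3 : ENNReal.ofReal (Δ ^ ((n:ℝ) / 4)) * volume G ≤ (M * B ^ 3) ^ ((1:ℝ) / 4) * Sg := by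
    have := ENNReal.rpow_le_rpow F2 (show (0:ℝ) ≤ 1 / 4 by norm_num)
    rw [ENNReal.mul_rpow_of_nonneg _ _ (by norm_num), ENNReal.mul_rpow_of_nonneg _ _ (by norm_num)] at this
    have p4 : ∀ x : ℝ≥0∞, (x ^ 4) ^ ((1:ℝ) / 4) = x := by
      intro x
      rw [← ENNReal.rpow_natCast, ← ENNReal.rpow_mul]
      norm_num
    have pd : ENNReal.ofReal (Δ ^ n) ^ ((1:ℝ) / 4) = ENNReal.ofReal (Δ ^ ((n:ℝ) / 4)) := by
      rw [ENNReal.ofReal_rpow_of_pos (by positivity), ← Real.rpow_natCast, ← Real.rpow_mul hΔ0.le]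
      congr 2; ring
    rw [p4, p4, pd] at this
    exact this
  have W : |u - s| ^ β * |ρ| ^ β * |t - s| ^ (3 * β + 2) ≤ 8 ^ ((n:ℝ) / 4) * Δ ^ ((n:ℝ) / 4) *
      (|u - s| ^ (-1 + η) * |ρ| ^ (-1 + η) * |t - s| ^ (-1 + 3 * η)) := by
    have e1 : |u - s| ^ β * |ρ| ^ β * |t - s| ^ (3 * β + 2) = (|u - s| * |ρ| * |t - s| ^ 3) ^ ((n:ℝ) / 4) *
        (|u - s| ^ (-1 + η) * |ρ| ^ (-1 + η) * |t - s| ^ (-1 + 3 * η)) := by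
      rw [Real.mul_rpow (by positivity) (by positivity), Real.mul_rpow (by positivity) (by positivity),
        ← Real.rpow_natCast, ← Real.rpow_mul hts'.le]
      rw [show β = (n:ℝ) / 4 + (-1 + η) by rw [hβ]; ring, Real.rpow_add hus', Real.rpow_add hρ',
        show 3 * ((n:ℝ) / 4 + (-1 + η)) + 2 = ((3:ℕ):ℝ) * ((n:ℝ) / 4) + (-1 + 3 * η) by push_cast; ring,
        Real.rpow_add hts']
      ring
    rw [e1, ← Real.mul_rpow (by norm_num) hΔ0.le]
    gcongr
  have k1 : kk η (u - s) = ENNReal.ofReal (|u - s| ^ (-1 + η)) := by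
    rw [kk, lei_of_le (by rw [abs_le]; constructor <;> linarith), one_mul]
  have k2 : kk η ρ = ENNReal.ofReal (|ρ| ^ (-1 + η)) := by
    rw [kk, lei_of_le (by linarith), one_mul]
  have k3 : kk (3 * η) (t - s) = ENNReal.ofReal (|t - s| ^ (-1 + 3 * η)) := by
    rw [kk, lei_of_le (by rw [abs_le]; constructor <;> linarith), one_mul]
  rw [k1, k2, k3, ← ENNReal.ofReal_mul (by positivity), ← ENNReal.ofReal_mul (by positivity)]
  calc _ ≤ volume G * ENNReal.ofReal (8 ^ ((n:ℝ) / 4) * Δ ^ ((n:ℝ) / 4) *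
      (|u - s| ^ (-1 + η) * |ρ| ^ (-1 + η) * |t - s| ^ (-1 + 3 * η))) := by gcongr
    _ = ENNReal.ofReal (8 ^ ((n:ℝ) / 4)) * (ENNReal.ofReal (Δ ^ ((n:ℝ) / 4)) * volume G) *
        ENNReal.ofReal (|u - s| ^ (-1 + η) * |ρ| ^ (-1 + η) * |t - s| ^ (-1 + 3 * η)) := by
        rw [ENNReal.ofReal_mul (by positivity), ENNReal.ofReal_mul (by positivity)]; ring
    _ ≤ ENNReal.ofReal (8 ^ ((n:ℝ) / 4)) * ((M * B ^ 3) ^ ((1:ℝ) / 4) * Sg) *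
        ENNReal.ofReal (|u - s| ^ (-1 + η) * |ρ| ^ (-1 + η) * |t - s| ^ (-1 + 3 * η)) :=
        mul_le_mul_left (mul_le_mul_right F3 _) _
    _ = _ := by ring

theorem kc_int (η : ℝ) (hη : 0 < η) : ∃ K : ℝ, 0 < K ∧ ∀ F : ℝ → ℝ≥0∞, Measurable F →
    ∫⁻ t, ∫⁻ ρ, ∫⁻ s, ∫⁻ u, (F s + F t + F u) * (kk η (u - s) * kk η ρ * kk (3 * η) (t - s)) ≤
      ENNReal.ofReal K * ∫⁻ t, F t := by
  obtain ⟨K1, h1, a1, b1⟩ := kk_int η hη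
  obtain ⟨K3, h3, a3, b3⟩ := kk_int (3 * η) (by positivity)
  refine ⟨3 * (K1 * (K1 * K3)), by positivity, ?_⟩
  intro F hF
  have r0 : ∫⁻ ρ, kk η ρ ≤ ENNReal.ofReal K1 := by simpa using a1 0
  have main : ∫⁻ t, ∫⁻ s, ∫⁻ u, (F s * (kk η (u - s) * kk (3 * η) (t - s)) + F t * (kk η (u - s) * kk (3 * η) (t - s))
      + F u * (kk η (u - s) * kk (3 * η) (t - s))) ≤ 3 * (ENNReal.ofReal K1 * ENNReal.ofReal K3 * ∫⁻ t, F t) := by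
    rw [tri_add _ (by fun_prop), tri_add _ (by fun_prop)]
    have c1 : ∫⁻ t, ∫⁻ s, ∫⁻ u, F s * (kk η (u - s) * kk (3 * η) (t - s)) ≤
        ENNReal.ofReal K1 * ENNReal.ofReal K3 * ∫⁻ t, F t := by
      rw [lsw (by fun_prop), ← lintegral_const_mul _ hF]
      apply lintegral_mono; intro s; simp only
      calc _ ≤ ∫⁻ t, F s * ENNReal.ofReal K1 * kk (3 * η) (t - s) := by
            apply lintegral_mono; intro t; simp only
            rw [lintegral_const_mul _ (by fun_prop), lintegral_mul_const _ (by fun_prop), mul_assoc]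
            gcongr; exact a1 s
        _ ≤ F s * ENNReal.ofReal K1 * ENNReal.ofReal K3 := by
            rw [lintegral_const_mul _ (by fun_prop)]; gcongr; exact a3 s
        _ = _ := by ring
    have c2 : ∫⁻ t, ∫⁻ s, ∫⁻ u, F t * (kk η (u - s) * kk (3 * η) (t - s)) ≤
        ENNReal.ofReal K1 * ENNReal.ofReal K3 * ∫⁻ t, F t := by
      rw [← lintegral_const_mul _ hF]
      apply lintegral_mono; intro t; simp only
      calc _ ≤ ∫⁻ s, F t * ENNReal.ofReal K1 * kk (3 * η) (t - s) := by
            apply lintegral_mono; intro s; simp only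
            rw [lintegral_const_mul _ (by fun_prop), lintegral_mul_const _ (by fun_prop), mul_assoc]
            gcongr; exact a1 s
        _ ≤ F t * ENNReal.ofReal K1 * ENNReal.ofReal K3 := by
            rw [lintegral_const_mul _ (by fun_prop)]; gcongr; exact b3 t
        _ = _ := by ring
    have c3 : ∫⁻ t, ∫⁻ s, ∫⁻ u, F u * (kk η (u - s) * kk (3 * η) (t - s)) ≤
        ENNReal.ofReal K1 * ENNReal.ofReal K3 * ∫⁻ t, F t := by
      rw [lsw (by fun_prop)]
      calc _ = ∫⁻ s, ∫⁻ u, ∫⁻ t, F u * (kk η (u - s) * kk (3 * η) (t - s)) := by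
            apply lintegral_congr; intro s; rw [lsw (by fun_prop)]
        _ = ∫⁻ u, ∫⁻ s, ∫⁻ t, F u * (kk η (u - s) * kk (3 * η) (t - s)) := by
            rw [lsw (by fun_prop)]
        _ ≤ _ := by
          rw [← lintegral_const_mul _ hF]
          apply lintegral_mono; intro u; simp only
          calc _ ≤ ∫⁻ s, F u * ENNReal.ofReal K3 * kk η (u - s) := by
                apply lintegral_mono; intro s; simp only
                rw [lintegral_const_mul _ (by fun_prop), lintegral_const_mul _ (by fun_prop), mul_assoc,
                  mul_comm (ENNReal.ofReal K3)]
                gcongr; exact a3 s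
            _ ≤ F u * ENNReal.ofReal K3 * ENNReal.ofReal K1 := by
                rw [lintegral_const_mul _ (by fun_prop)]; gcongr; exact b1 u
            _ = _ := by ring
    refine (add_le_add (add_le_add c1 c2) c3).trans (le_of_eq ?_)
    ring
  calc _ = ∫⁻ t, ∫⁻ ρ, kk η ρ * ∫⁻ s, ∫⁻ u, (F s * (kk η (u - s) * kk (3 * η) (t - s)) + F t * (kk η (u - s) * kk (3 * η) (t - s))
      + F u * (kk η (u - s) * kk (3 * η) (t - s))) := by
        apply lintegral_congr; intro t; apply lintegral_congr; intro ρ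
        rw [← lintegral_const_mul _ (by fun_prop)]
        apply lintegral_congr; intro s
        rw [← lintegral_const_mul _ (by fun_prop)]
        apply lintegral_congr; intro u
        ring
    _ = (∫⁻ ρ, kk η ρ) * ∫⁻ t, ∫⁻ s, ∫⁻ u, (F s * (kk η (u - s) * kk (3 * η) (t - s)) + F t * (kk η (u - s) * kk (3 * η) (t - s))
      + F u * (kk η (u - s) * kk (3 * η) (t - s))) := by
        rw [← lintegral_const_mul _ (by fun_prop)]
        apply lintegral_congr; intro t
        rw [lintegral_mul_const _ (by fun_prop)]
    _ ≤ ENNReal.ofReal K1 * (3 * (ENNReal.ofReal K1 * ENNReal.ofReal K3 * ∫⁻ t, F t)) := by gcongr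
    _ = _ := by
        rw [ENNReal.ofReal_mul (by norm_num), ENNReal.ofReal_mul h1.le, ENNReal.ofReal_mul h1.le]
        simp; ring


theorem swap5 {γ : Type*} [MeasurableSpace γ] (μ : Measure γ) [SFinite μ]
    (F : γ → ℝ → ℝ → ℝ → ℝ → ℝ≥0∞)
    (hF : Measurable fun z : γ × ℝ × ℝ × ℝ × ℝ => F z.1 z.2.1 z.2.2.1 z.2.2.2.1 z.2.2.2.2) :
    ∫⁻ g, (∫⁻ t, ∫⁻ ρ, ∫⁻ s, ∫⁻ u, F g t ρ s u) ∂μ = ∫⁻ t, ∫⁻ ρ, ∫⁻ s, ∫⁻ u, ∫⁻ g, F g t ρ s u ∂μ := by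
  have m3 : Measurable fun z : γ × ℝ × ℝ × ℝ => ∫⁻ u, F z.1 z.2.1 z.2.2.1 z.2.2.2 u := by
    apply Measurable.lintegral_prod_right' (f := fun w : (γ × ℝ × ℝ × ℝ) × ℝ => F w.1.1 w.1.2.1 w.1.2.2.1 w.1.2.2.2 w.2)
    exact hF.comp (by fun_prop : Measurable fun w : (γ × ℝ × ℝ × ℝ) × ℝ => (w.1.1, w.1.2.1, w.1.2.2.1, w.1.2.2.2, w.2))
  have m2 : Measurable fun z : γ × ℝ × ℝ => ∫⁻ s, ∫⁻ u, F z.1 z.2.1 z.2.2 s u := by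
    apply Measurable.lintegral_prod_right' (f := fun w : (γ × ℝ × ℝ) × ℝ => ∫⁻ u, F w.1.1 w.1.2.1 w.1.2.2 w.2 u)
    exact m3.comp (by fun_prop : Measurable fun w : (γ × ℝ × ℝ) × ℝ => (w.1.1, w.1.2.1, w.1.2.2, w.2))
  have m1 : Measurable fun z : γ × ℝ => ∫⁻ ρ, ∫⁻ s, ∫⁻ u, F z.1 z.2 ρ s u := by
    apply Measurable.lintegral_prod_right' (f := fun w : (γ × ℝ) × ℝ => ∫⁻ s, ∫⁻ u, F w.1.1 w.1.2 w.2 s u)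
    exact m2.comp (by fun_prop : Measurable fun w : (γ × ℝ) × ℝ => (w.1.1, w.1.2, w.2))
  rw [lintegral_lintegral_swap m1.aemeasurable]
  apply lintegral_congr; intro t
  rw [lintegral_lintegral_swap]
  swap
  · exact Measurable.aemeasurable (m2.comp (by fun_prop : Measurable fun w : γ × ℝ => (w.1, t, w.2)))
  apply lintegral_congr; intro ρ
  rw [lintegral_lintegral_swap]
  swap
  · exact Measurable.aemeasurable (m3.comp (by fun_prop : Measurable fun w : γ × ℝ => (w.1, t, ρ, w.2)))
  apply lintegral_congr; intro s
  rw [lintegral_lintegral_swap]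
  · exact Measurable.aemeasurable (hF.comp (by fun_prop : Measurable fun w : γ × ℝ => (w.1, t, ρ, s, w.2)))

theorem kc_core {n : ℕ} (hn : 5 ≤ n) (η : ℝ) (hη : 0 < η) : ∃ K : ℝ, 0 < K ∧
    ∀ (E : Set (Euc n × ℝ)), MeasurableSet E → ∀ (G : Set (Euc n × Euc n)), MeasurableSet G →
    ∀ (M B : ℝ≥0∞), (∀ ξ, volume (Prod.mk ξ ⁻¹' G) ≤ M) → (∀ a, volume (slice E a) ≤ B) →
    (∀ z ∈ E, z.2 ∈ Set.Ioc (0:ℝ) 1) → ∀ y : ℝ, 0 < y →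
    (∀ g ∈ G, ENNReal.ofReal y ≤ ∫⁻ t, E.indicator (fun _ => (1:ℝ≥0∞)) (g.2 + t • g.1, t)) →
    volume G * ENNReal.ofReal (y ^ ((n:ℝ) + 1 + 4 * η)) ≤
      ENNReal.ofReal K * (M * B ^ 3) ^ ((1:ℝ) / 4) * volume E := by
  set β : ℝ := n / 4 - 1 + η with hβ
  have hβ0 : 0 < β := by
    have : (5:ℝ) ≤ n := by exact_mod_cast hn
    rw [hβ]; linarith
  obtain ⟨K1, hK1, h1⟩ := oneD β hβ0
  obtain ⟨K2, hK2, h2⟩ := kc_int η hη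
  refine ⟨K1 * (8 ^ ((n:ℝ) / 4) * K2), by positivity, ?_⟩
  intro E hE G hG M B hM hB h01 y hy hyG
  set χ : Euc n × ℝ → ℝ≥0∞ := E.indicator (fun _ => (1:ℝ≥0∞)) with hχ
  have χm : Measurable χ := measurable_const.indicator hE
  have χ1 : ∀ z, χ z ≤ 1 := fun z => Set.indicator_le_self' (by simp) z |>.trans le_rfl
  set w : ℝ → ℝ → ℝ → ℝ → ℝ≥0∞ := fun t ρ s u => (lei |ρ| (1 / 2) * lei |u - s| (|t - s| / 8) *
        ENNReal.ofReal (|u - s| ^ β * |ρ| ^ β * |t - s| ^ (3 * β + 2))) with hw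
  set Φ : Euc n × Euc n → ℝ → ℝ → ℝ → ℝ → ℝ≥0∞ := fun g t ρ s u =>
    χ (g.2 + t • g.1, t) * χ (g.2 + s • g.1, s) * χ (g.2 + u • g.1, u) *
    χ (g.2 + (t - ρ * (t - s)) • g.1, t - ρ * (t - s)) * χ (g.2 + (t - ρ * (t - u)) • g.1, t - ρ * (t - u)) with hΦ
  have Φm : Measurable fun z : (Euc n × Euc n) × ℝ × ℝ × ℝ × ℝ => Φ z.1 z.2.1 z.2.2.1 z.2.2.2.1 z.2.2.2.2 := by
    simp only [hΦ]; fun_prop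
  have wm : Measurable fun z : ℝ × ℝ × ℝ × ℝ => w z.1 z.2.1 z.2.2.1 z.2.2.2 := by
    simp only [hw]; fun_prop
  have pt : ∀ g ∈ G, ENNReal.ofReal (y ^ (5 + 4 * β)) ≤
      ENNReal.ofReal K1 * ∫⁻ t, ∫⁻ ρ, ∫⁻ s, ∫⁻ u, Φ g t ρ s u * w t ρ s u := by
    intro g hg
    set e : ℝ → ℝ≥0∞ := fun t => χ (g.2 + t • g.1, t) with he
    have hle : ∫⁻ t, e t ≤ 1 := by
      calc ∫⁻ t, e t ≤ ∫⁻ t, (Set.Ioc (0:ℝ) 1).indicator (fun _ => (1:ℝ≥0∞)) t := by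
            apply lintegral_mono; intro t
            by_cases hm : (g.2 + t • g.1, t) ∈ E
            · have := h01 _ hm
              simp only at this
              rw [Set.indicator_of_mem this]; exact χ1 _
            · simp only [he, hχ]
              rw [Set.indicator_of_notMem hm]; exact zero_le
        _ = 1 := by
            rw [lintegral_indicator measurableSet_Ioc]; simp
    have hfin : ∫⁻ t, e t ≠ ∞ := ne_top_of_le_ne_top one_ne_top hle
    have hyy : y ≤ (∫⁻ t, e t).toReal := by
      rw [← ENNReal.ofReal_le_iff_le_toReal hfin]; exact hyG g hg
    refine le_trans ?_ (h1 e (by simp only [he]; fun_prop) (fun x => χ1 _) (∫⁻ t, e t).toReal (hy.trans_le hyy)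
      (ENNReal.ofReal_toReal hfin).symm)
    apply ENNReal.ofReal_le_ofReal
    gcongr
  have ex : (5:ℝ) + 4 * β = n + 1 + 4 * η := by rw [hβ]; ring
  rw [ex] at pt
  have inner : ∀ t ρ s u, ρ ≠ 0 → u ≠ s → ∫⁻ g in G, Φ g t ρ s u * w t ρ s u ≤
      ENNReal.ofReal (8 ^ ((n:ℝ) / 4)) * (M * B ^ 3) ^ ((1:ℝ) / 4) *
      ((volume (slice E s) + volume (slice E t) + volume (slice E u)) *
        (kk η (u - s) * kk η ρ * kk (3 * η) (t - s))) := by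
    intro t ρ s u hρ hus
    set S : Set (Euc n × Euc n) := {g | (g.2 + t • g.1, t) ∈ E ∧ (g.2 + s • g.1, s) ∈ E ∧ (g.2 + u • g.1, u) ∈ E ∧
      (g.2 + (t - ρ * (t - s)) • g.1, t - ρ * (t - s)) ∈ E ∧ (g.2 + (t - ρ * (t - u)) • g.1, t - ρ * (t - u)) ∈ E} with hS
    have pm : ∀ a : ℝ, MeasurableSet {g : Euc n × Euc n | (g.2 + a • g.1, a) ∈ E} := fun a =>
      hE.preimage (f := fun g : Euc n × Euc n => (g.2 + a • g.1, a)) (by fun_prop)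
    have Sm : MeasurableSet S := (pm _).inter ((pm _).inter ((pm _).inter ((pm _).inter (pm _))))
    have e1 : ∀ g, Φ g t ρ s u ≤ S.indicator (fun _ => (1:ℝ≥0∞)) g := by
      intro g
      by_cases hg : g ∈ S
      · rw [Set.indicator_of_mem hg]
        simp only [hΦ]
        exact mul_le_one' (mul_le_one' (mul_le_one' (mul_le_one' (χ1 _) (χ1 _)) (χ1 _)) (χ1 _)) (χ1 _)
      · rw [Set.indicator_of_notMem hg]
        simp only [hΦ, nonpos_iff_eq_zero, mul_eq_zero, hχ, Set.indicator_apply_eq_zero, one_ne_zero, imp_false]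
        simp only [hS, Set.mem_ofPred_eq] at hg
        tauto
    calc ∫⁻ g in G, Φ g t ρ s u * w t ρ s u ≤ ∫⁻ g in G, S.indicator (fun _ => (1:ℝ≥0∞)) g * w t ρ s u :=
          lintegral_mono fun g => mul_le_mul_left (e1 g) _
      _ = volume (S ∩ G) * w t ρ s u := by
          rw [lintegral_mul_const _ (measurable_const.indicator Sm), lintegral_indicator Sm]
          simp [Measure.restrict_apply, Sm]
      _ ≤ _ := by
          apply kc_pt η β hβ E hE (S ∩ G) (Sm.inter hG) M B _ hB h01 s t u ρ hρ hus
          · intro g hg; exact hg.1.2.1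
          · intro g hg; exact hg.1.1
          · intro g hg; exact hg.1.2.2.1
          · intro g hg; exact hg.1.2.2.2.1
          · intro g hg; exact hg.1.2.2.2.2
          · intro ξ
            exact (measure_mono (Set.preimage_mono Set.inter_subset_right)).trans (hM ξ)
  have Fm : Measurable fun t => volume (slice E t) := measurable_measure_prodMk_right hE
  have Fint : ∫⁻ t, volume (slice E t) = volume E := by
    rw [Measure.volume_eq_prod, Measure.prod_apply_symm hE]; rfl
  obtain ⟨Fv, hFv⟩ : ∃ Fv : ℝ → ℝ≥0∞, ∀ t, Fv t = volume (slice E t) := ⟨fun t => volume (slice E t), fun _ => rfl⟩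
  simp only [← hFv] at inner Fm Fint
  set D : ℝ≥0∞ := ENNReal.ofReal (8 ^ ((n:ℝ) / 4)) * (M * B ^ 3) ^ ((1:ℝ) / 4) with hD
  calc volume G * ENNReal.ofReal (y ^ ((n:ℝ) + 1 + 4 * η)) = ∫⁻ g in G, ENNReal.ofReal (y ^ ((n:ℝ) + 1 + 4 * η)) := by
        simp [mul_comm]
    _ ≤ ∫⁻ g in G, ENNReal.ofReal K1 * ∫⁻ t, ∫⁻ ρ, ∫⁻ s, ∫⁻ u, Φ g t ρ s u * w t ρ s u :=
        setLIntegral_mono' hG pt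
    _ = ENNReal.ofReal K1 * ∫⁻ t, ∫⁻ ρ, ∫⁻ s, ∫⁻ u, ∫⁻ g in G, Φ g t ρ s u * w t ρ s u := by
        rw [lintegral_const_mul' _ _ ENNReal.ofReal_ne_top, swap5 (volume.restrict G) (fun g t ρ s u => Φ g t ρ s u * w t ρ s u)]
        exact Φm.mul (wm.comp measurable_snd)
    _ ≤ ENNReal.ofReal K1 * ∫⁻ t, ∫⁻ ρ, ∫⁻ s, ∫⁻ u, D *
      ((Fv s + Fv t + Fv u) *
        (kk η (u - s) * kk η ρ * kk (3 * η) (t - s))) := by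
        apply mul_le_mul_right
        apply lintegral_mono; intro t; simp only
        apply lintegral_mono_ae
        filter_upwards [compl_mem_ae_iff.2 (measure_singleton (0:ℝ))] with ρ hρ
        apply lintegral_mono; intro s; simp only
        apply lintegral_mono_ae
        filter_upwards [compl_mem_ae_iff.2 (measure_singleton s)] with u hu
        exact inner t ρ s u (by simpa using hρ) (by simpa using hu)
    _ = ENNReal.ofReal K1 * (D * ∫⁻ t, ∫⁻ ρ, ∫⁻ s, ∫⁻ u,
      ((Fv s + Fv t + Fv u) *
        (kk η (u - s) * kk η ρ * kk (3 * η) (t - s)))) := by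
        congr 1
        rw [← lintegral_const_mul _ (by fun_prop)]
        apply lintegral_congr; intro t
        rw [← lintegral_const_mul _ (by fun_prop)]
        apply lintegral_congr; intro ρ
        rw [← lintegral_const_mul _ (by fun_prop)]
        apply lintegral_congr; intro s
        rw [← lintegral_const_mul _ (by fun_prop)]
    _ ≤ ENNReal.ofReal K1 * (D * (ENNReal.ofReal K2 * ∫⁻ t, Fv t)) := by
        apply mul_le_mul_right; apply mul_le_mul_right
        exact h2 (fun t => Fv t) Fm
    _ = _ := by
        rw [Fint, hD, ENNReal.ofReal_mul hK1.le, ENNReal.ofReal_mul (by positivity)]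
        ring


theorem keyclaim {n : ℕ} (hn : 5 ≤ n) (η : ℝ) (hη : 0 < η) : ∃ K : ℝ, 0 < K ∧
    ∀ (E : Set (Euc n × ℝ)), MeasurableSet E → ∀ V : ℝ, 0 < V → volume E ≤ ENNReal.ofReal V →
    ∀ l : ℝ, 0 < l → ∀ (G : Set (Euc n × Euc n)), MeasurableSet G →
    ∀ (M : ℝ≥0∞), (∀ ξ, volume (Prod.mk ξ ⁻¹' G) ≤ M) →
    (∀ g ∈ G, ENNReal.ofReal l ≤ xrayT (E.indicator (fun _ => (1:ℝ≥0∞))) g.1 g.2) →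
    volume G ^ 4 * ENNReal.ofReal (l ^ (4 * (n:ℝ) + 7 + 16 * η)) ≤
      ENNReal.ofReal K * M * ENNReal.ofReal (V ^ 7) := by
  obtain ⟨K, hK, hcore⟩ := kc_core hn η hη
  refine ⟨2 ^ (4 * (n:ℝ) + 4 + 16 * η) * K ^ 4 * 8, by positivity, ?_⟩
  intro E hE V hV hVE l hl G hG M hM hGl
  have Fm : Measurable fun t => volume (slice E t) := measurable_measure_prodMk_right hE
  have Fint : ∫⁻ t, volume (slice E t) = volume E := by
    rw [Measure.volume_eq_prod, Measure.prod_apply_symm hE]; rfl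
  set b : ℝ := 2 * V / l with hb
  have hb0 : 0 < b := by positivity
  set B : ℝ≥0∞ := ENNReal.ofReal b with hB
  set bad : Set ℝ := {t | B ≤ volume (slice E t)} with hbad
  have badm : MeasurableSet bad := measurableSet_le measurable_const Fm
  have hbadv : volume bad ≤ ENNReal.ofReal (l / 2) := by
    have h := (mul_meas_ge_le_lintegral (μ := volume) Fm B).trans (Fint.le.trans hVE)
    have h2 : ENNReal.ofReal V = B * ENNReal.ofReal (l / 2) := by
      rw [hB, ← ENNReal.ofReal_mul hb0.le, hb]; congr 1; field_simp
    rw [h2] at h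
    exact (ENNReal.mul_le_mul_iff_right (by simpa [hB] using hb0) ENNReal.ofReal_ne_top).1 h
  set E' : Set (Euc n × ℝ) := E ∩ (Prod.snd ⁻¹' (Set.Ioc (0:ℝ) 1 ∩ badᶜ)) with hE'
  have E'm : MeasurableSet E' := hE.inter (measurable_snd (measurableSet_Ioc.inter badm.compl))
  have hE'V : volume E' ≤ ENNReal.ofReal V := (measure_mono Set.inter_subset_left).trans hVE
  have hsl : ∀ a, volume (slice E' a) ≤ B := by
    intro a
    by_cases ha : a ∈ bad
    · have : slice E' a = ∅ := by
        ext y; simp [slice, hE', ha]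
      rw [this]; simp
    · refine (measure_mono (show slice E' a ⊆ slice E a from Set.preimage_mono Set.inter_subset_left)).trans ?_
      have : ¬ B ≤ volume (slice E a) := ha
      exact (not_le.1 this).le
  have hc := hcore E' E'm G hG M B hM hsl (fun z hz => hz.2.1) (l / 2) (by positivity) (by
    intro g hg
    have h1 := hGl g hg
    have h2 : xrayT (E.indicator (fun _ => (1:ℝ≥0∞))) g.1 g.2 ≤
        (∫⁻ t, E'.indicator (fun _ => (1:ℝ≥0∞)) (g.2 + t • g.1, t)) + volume bad := by
      unfold xrayT
      rw [← lintegral_indicator measurableSet_Ioc]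
      have : volume bad = ∫⁻ t, bad.indicator (fun _ => (1:ℝ≥0∞)) t := by
        rw [lintegral_indicator badm]; simp
      rw [this, ← lintegral_add_right _ (measurable_const.indicator badm)]
      apply lintegral_mono
      intro t
      simp only
      by_cases ht : t ∈ Set.Ioc (0:ℝ) 1
      swap
      · rw [Set.indicator_of_notMem ht]; exact zero_le
      rw [Set.indicator_of_mem ht]
      by_cases hm : (g.2 + t • g.1, t) ∈ E
      swap
      · rw [Set.indicator_of_notMem hm]; exact zero_le
      rw [Set.indicator_of_mem hm]
      by_cases htb : t ∈ bad
      · rw [Set.indicator_of_mem htb]; exact le_add_self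
      · rw [Set.indicator_of_mem (show (g.2 + t • g.1, t) ∈ E' from ⟨hm, ht, htb⟩)]; exact le_self_add
    have h3 : ENNReal.ofReal (l / 2) + ENNReal.ofReal (l / 2) ≤
        (∫⁻ t, E'.indicator (fun _ => (1:ℝ≥0∞)) (g.2 + t • g.1, t)) + ENNReal.ofReal (l / 2) := by
      rw [← ENNReal.ofReal_add (by positivity) (by positivity), add_halves]
      exact h1.trans (h2.trans (by gcongr))
    exact (ENNReal.add_le_add_iff_right ENNReal.ofReal_ne_top).1 h3)
  have hc2 : (volume G * ENNReal.ofReal ((l / 2) ^ ((n:ℝ) + 1 + 4 * η))) ^ 4 ≤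
      (ENNReal.ofReal K * (M * B ^ 3) ^ ((1:ℝ) / 4) * ENNReal.ofReal V) ^ 4 := by
    exact pow_le_pow_left₀ zero_le (hc.trans (by gcongr)) 4
  have p4 : ((M * B ^ 3) ^ ((1:ℝ) / 4)) ^ 4 = M * B ^ 3 := by
    rw [← ENNReal.rpow_natCast, ← ENNReal.rpow_mul]
    norm_num
  rw [mul_pow, mul_pow, mul_pow, p4, ← ENNReal.ofReal_pow (by positivity), ← ENNReal.ofReal_pow hK.le,
    ← ENNReal.ofReal_pow hV.le, hB, ← ENNReal.ofReal_pow hb0.le, ← Real.rpow_natCast, ← Real.rpow_mul (by positivity)] at hc2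
  have e1 : l ^ (4 * (n:ℝ) + 7 + 16 * η) = (l / 2) ^ (((n:ℝ) + 1 + 4 * η) * ((4:ℕ):ℝ)) *
      (2 ^ (4 * (n:ℝ) + 4 + 16 * η) * l ^ 3) := by
    rw [show ((n:ℝ) + 1 + 4 * η) * ((4:ℕ):ℝ) = 4 * (n:ℝ) + 4 + 16 * η by push_cast; ring,
      show 4 * (n:ℝ) + 7 + 16 * η = (4 * (n:ℝ) + 4 + 16 * η) + ((3:ℕ):ℝ) by push_cast; ring,
      Real.rpow_add hl, Real.rpow_natCast, Real.div_rpow hl.le (by norm_num)]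
    field_simp
  calc volume G ^ 4 * ENNReal.ofReal (l ^ (4 * (n:ℝ) + 7 + 16 * η))
      = (volume G ^ 4 * ENNReal.ofReal ((l / 2) ^ (((n:ℝ) + 1 + 4 * η) * ((4:ℕ):ℝ)))) *
        ENNReal.ofReal (2 ^ (4 * (n:ℝ) + 4 + 16 * η) * l ^ 3) := by
        rw [e1, ENNReal.ofReal_mul (by positivity)]; ring
    _ ≤ (ENNReal.ofReal (K ^ 4) * (M * ENNReal.ofReal (b ^ 3)) * ENNReal.ofReal (V ^ 4)) *
        ENNReal.ofReal (2 ^ (4 * (n:ℝ) + 4 + 16 * η) * l ^ 3) := mul_le_mul_left hc2 _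
    _ = M * ENNReal.ofReal (K ^ 4 * b ^ 3 * V ^ 4 * (2 ^ (4 * (n:ℝ) + 4 + 16 * η) * l ^ 3)) := by
        rw [ENNReal.ofReal_mul (p := K ^ 4 * b ^ 3 * V ^ 4) (by positivity), ENNReal.ofReal_mul (p := K ^ 4 * b ^ 3) (by positivity),
          ENNReal.ofReal_mul (p := K ^ 4) (by positivity)]
        ring
    _ = M * ENNReal.ofReal ((2 ^ (4 * (n:ℝ) + 4 + 16 * η) * K ^ 4 * 8) * V ^ 7) := by
        congr 2; rw [hb]; field_simp; ring
    _ = _ := by rw [ENNReal.ofReal_mul (by positivity)]; ring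


theorem rpow_tsum_le {ι : Type*} (f : ι → ℝ≥0∞) (a : ℝ) (ha : 0 < a) (ha1 : a ≤ 1) :
    (∑' i, f i) ^ a ≤ ∑' i, f i ^ a := by
  have h1 : Filter.Tendsto (fun s : Finset ι => (∑ i ∈ s, f i) ^ a) Filter.atTop (nhds ((∑' i, f i) ^ a)) :=
    (ENNReal.continuous_rpow_const.tendsto _).comp ENNReal.summable.hasSum
  refine le_of_tendsto' h1 fun s => ?_
  refine le_trans ?_ (ENNReal.sum_le_tsum s)
  induction s using Finset.cons_induction with
  | empty => simp [ENNReal.zero_rpow_of_pos ha]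
  | cons i s his ih =>
    rw [Finset.sum_cons, Finset.sum_cons]
    exact (ENNReal.rpow_add_le_add_rpow _ _ ha.le ha1).trans (by gcongr)

theorem geo (c θ : ℝ) (hc : 0 ≤ c) (hθ : 0 ≤ θ) (hθ1 : θ < 1) :
    ∑' k : ℕ, ENNReal.ofReal (c * θ ^ k) = ENNReal.ofReal (c * (1 - θ)⁻¹) := by
  rw [← ENNReal.ofReal_tsum_of_nonneg (fun k => by positivity) ((summable_geometric_of_lt_one hθ hθ1).mul_left c),
    tsum_mul_left, tsum_geometric_of_lt_one hθ hθ1]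

theorem dyad (X : ℝ) (hX : 0 < X) (m : ℝ≥0∞) (hm : m ≤ ENNReal.ofReal X) (hm0 : m ≠ 0) :
    ∃ k : ℕ, ENNReal.ofReal (X * (1 / 2) ^ k / 2) < m ∧ m ≤ ENNReal.ofReal (X * (1 / 2) ^ k) := by
  have hf : m ≠ ∞ := ne_top_of_le_ne_top ENNReal.ofReal_ne_top hm
  have h0 : 0 < m.toReal := ENNReal.toReal_pos hm0 hf
  have h1 : m.toReal ≤ X := ENNReal.toReal_le_of_le_ofReal hX.le hm
  obtain ⟨k, h2, h3⟩ := exists_nat_pow_near_of_lt_one (div_pos h0 hX) ((div_le_one hX).2 h1)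
    (show (0:ℝ) < 1 / 2 by norm_num) (show (1:ℝ) / 2 < 1 by norm_num)
  rw [lt_div_iff₀ hX] at h2
  rw [div_le_iff₀ hX] at h3
  refine ⟨k, ?_, ?_⟩
  · rw [ENNReal.ofReal_lt_iff_lt_toReal (by positivity) hf]
    calc _ = (1 / 2) ^ (k + 1) * X := by ring
      _ < _ := h2
  · rw [ENNReal.le_ofReal_iff_toReal_le hf (by positivity)]; linarith

@[fun_prop]
theorem xrayT_meas {n : ℕ} {f : Euc n × ℝ → ℝ≥0∞} (hf : Measurable f) :
    Measurable fun z : Euc n × Euc n => xrayT f z.1 z.2 := by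
  unfold xrayT; fun_prop

theorem xrayT_le_one {n : ℕ} (f : Euc n × ℝ → ℝ≥0∞) (hf : ∀ z, f z ≤ 1) (ξ x : Euc n) : xrayT f ξ x ≤ 1 := by
  unfold xrayT
  calc _ ≤ ∫⁻ t in Set.Ioc (0:ℝ) 1, 1 := lintegral_mono fun t => hf _
    _ = 1 := by simp

theorem xrayT_int {n : ℕ} {f : Euc n × ℝ → ℝ≥0∞} (hf : Measurable f) (ξ : Euc n) :
    ∫⁻ x, xrayT f ξ x ≤ ∫⁻ z, f z := by
  unfold xrayT
  rw [lintegral_lintegral_swap (by fun_prop)]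
  calc _ = ∫⁻ t in Set.Ioc (0:ℝ) 1, ∫⁻ x, f (x, t) := by
        apply lintegral_congr; intro t
        exact lintegral_add_right_eq_self (fun x => f (x, t)) (t • ξ)
    _ ≤ ∫⁻ t, ∫⁻ x, f (x, t) := setLIntegral_le_lintegral _ _
    _ = _ := by rw [Measure.volume_eq_prod, lintegral_prod_symm' f hf]


/-- superlevel sets of the transform of an indicator -/
def Lv {n : ℕ} (E : Set (Euc n × ℝ)) (l : ℝ) : Set (Euc n × Euc n) :=
  {z | ENNReal.ofReal l ≤ xrayT (E.indicator (fun _ => (1:ℝ≥0∞))) z.1 z.2}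

theorem Lv_meas {n : ℕ} {E : Set (Euc n × ℝ)} (hE : MeasurableSet E) (l : ℝ) : MeasurableSet (Lv E l) :=
  measurableSet_le measurable_const (xrayT_meas (measurable_const.indicator hE))

theorem Lv_le {n : ℕ} {E : Set (Euc n × ℝ)} (hE : MeasurableSet E) (l V : ℝ) (hl : 0 < l) (hV : 0 < V)
    (hVE : volume E ≤ ENNReal.ofReal V) (ξ : Euc n) :
    volume (Prod.mk ξ ⁻¹' Lv E l) ≤ ENNReal.ofReal (V / l) := by
  have χm : Measurable (E.indicator (fun _ => (1:ℝ≥0∞))) := measurable_const.indicator hE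
  have h := mul_meas_ge_le_lintegral (μ := volume)
    (show Measurable fun x => xrayT (E.indicator (fun _ => (1:ℝ≥0∞))) ξ x from
      (xrayT_meas χm).comp measurable_prodMk_left) (ENNReal.ofReal l)
  have h2 := h.trans (xrayT_int χm ξ)
  rw [lintegral_indicator hE] at h2
  simp only [lintegral_const, one_mul, Measure.restrict_apply MeasurableSet.univ, Set.univ_inter] at h2
  have e : ENNReal.ofReal V = ENNReal.ofReal l * ENNReal.ofReal (V / l) := by
    rw [← ENNReal.ofReal_mul hl.le]; congr 1; field_simp
  have h3 := h2.trans hVE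
  rw [e] at h3
  exact (ENNReal.mul_le_mul_iff_right (by simpa using hl) ENNReal.ofReal_ne_top).1 h3

theorem interp_real (ω b τ V l K κ N : ℝ) (hω : 0 ≤ ω) (hb : ω ≤ b) (hb0 : 0 < b) (hτ : 0 < τ) (hV : 0 < V) (hl : 0 < l)
    (hK : 0 < K) (hκ : 0 < κ) (hκ1 : κ ≤ 1) (h : (ω * (τ / 2)) ^ 4 * l ^ N ≤ K * τ * V ^ 7) :
    ω ≤ (b ^ (1 - κ) * (16 * K) ^ (κ / 4)) * (τ ^ (-(3 * κ / 4)) * V ^ (7 * κ / 4) * l ^ (-(κ * N / 4))) := by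
  rcases hω.eq_or_lt with h0 | h0
  · rw [← h0]; positivity
  have h1 : ω ^ 4 ≤ (16 * K) * (τ ^ (-(3:ℝ)) * V ^ (7:ℝ) * l ^ (-N)) := by
    rw [Real.rpow_neg hτ.le, Real.rpow_neg hl.le]
    have := Real.rpow_pos_of_pos hl N
    norm_cast
    rw [← mul_le_mul_iff_left₀ (show 0 < τ ^ 4 / 16 * l ^ N by positivity)]
    calc _ = (ω * (τ / 2)) ^ 4 * l ^ N := by ring
      _ ≤ _ := h
      _ = _ := by field_simp
  have h2 : ω = ω ^ (1 - κ) * (ω ^ 4) ^ (κ / 4) := by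
    rw [← Real.rpow_natCast, ← Real.rpow_mul h0.le, ← Real.rpow_add h0]
    have : 1 - κ + ((4:ℕ):ℝ) * (κ / 4) = 1 := by push_cast; ring
    rw [this, Real.rpow_one]
  calc ω = ω ^ (1 - κ) * (ω ^ 4) ^ (κ / 4) := h2
    _ ≤ b ^ (1 - κ) * ((16 * K) * (τ ^ (-(3:ℝ)) * V ^ (7:ℝ) * l ^ (-N))) ^ (κ / 4) := by
        have : 0 ≤ 1 - κ := by linarith
        gcongr
    _ = _ := by
        rw [Real.mul_rpow (by positivity) (by positivity), Real.mul_rpow (by positivity) (by positivity),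
          Real.mul_rpow (by positivity) (by positivity), Real.mul_rpow (by positivity) (by positivity), ← Real.rpow_mul hτ.le, ← Real.rpow_mul hV.le,
          ← Real.rpow_mul hl.le]
        rw [show -(3:ℝ) * (κ / 4) = -(3 * κ / 4) by ring, show (7:ℝ) * (κ / 4) = 7 * κ / 4 by ring,
          show -N * (κ / 4) = -(κ * N / 4) by ring]
        ring

theorem omega_bound {n : ℕ} (hn : 5 ≤ n) (κ η C : ℝ) (hκ : 0 < κ) (hκ1 : κ ≤ 1) (hη : 0 < η) :
    ∃ K : ℝ, 0 < K ∧ ∀ (E : Set (Euc n × ℝ)), MeasurableSet E → ∀ V : ℝ, 0 < V → volume E ≤ ENNReal.ofReal V →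
    ∀ l : ℝ, 0 < l → ∀ τ : ℝ, 0 < τ →
    volume (Metric.ball (0 : Euc n) C ∩ {ξ | ENNReal.ofReal (τ / 2) < volume (Prod.mk ξ ⁻¹' Lv E l) ∧
      volume (Prod.mk ξ ⁻¹' Lv E l) ≤ ENNReal.ofReal τ}) ≤
    ENNReal.ofReal (K * (τ ^ (-(3 * κ / 4)) * V ^ (7 * κ / 4) * l ^ (-(κ * (4 * (n:ℝ) + 7 + 16 * η) / 4)))) := by
  obtain ⟨K, hK, hkey⟩ := keyclaim hn η hη
  set b : ℝ := (volume (Metric.ball (0 : Euc n) C)).toReal + 1 with hb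
  have hb0 : 0 < b := by positivity
  refine ⟨b ^ (1 - κ) * (16 * K) ^ (κ / 4), by positivity, ?_⟩
  intro E hE V hV hVE l hl τ hτ
  set m : Euc n → ℝ≥0∞ := fun ξ => volume (Prod.mk ξ ⁻¹' Lv E l) with hm
  have mm : Measurable m := measurable_measure_prodMk_left (Lv_meas hE l)
  set Ω := Metric.ball (0 : Euc n) C ∩ {ξ | ENNReal.ofReal (τ / 2) < m ξ ∧ m ξ ≤ ENNReal.ofReal τ} with hΩ
  have Ωm : MeasurableSet Ω := measurableSet_ball.inter
    ((measurableSet_lt measurable_const mm).inter (measurableSet_le mm measurable_const))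
  have bfin : volume (Metric.ball (0 : Euc n) C) ≠ ∞ := measure_ball_lt_top.ne
  have Ωfin : volume Ω ≠ ∞ := ne_top_of_le_ne_top bfin (measure_mono Set.inter_subset_left)
  set G : Set (Euc n × Euc n) := Prod.fst ⁻¹' Ω ∩ Lv E l with hG
  have Gm : MeasurableSet G := (measurable_fst Ωm).inter (Lv_meas hE l)
  have fib : ∀ ξ, volume (Prod.mk ξ ⁻¹' G) ≤ ENNReal.ofReal τ := by
    intro ξ
    by_cases hξ : ξ ∈ Ω
    · refine (measure_mono ?_).trans hξ.2.2
      intro x hx; exact hx.2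
    · have : Prod.mk ξ ⁻¹' G = ∅ := by
        ext x; simp [hG, hξ]
      rw [this]; simp
  have k := hkey E hE V hV hVE l hl G Gm (ENNReal.ofReal τ) fib (fun g hg => hg.2)
  have lower : volume Ω * ENNReal.ofReal (τ / 2) ≤ volume G := by
    rw [Measure.volume_eq_prod, Measure.prod_apply Gm]
    calc volume Ω * ENNReal.ofReal (τ / 2) = ∫⁻ ξ in Ω, ENNReal.ofReal (τ / 2) := by simp [mul_comm]
      _ ≤ ∫⁻ ξ in Ω, volume (Prod.mk ξ ⁻¹' G) := by
          apply setLIntegral_mono' Ωm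
          intro ξ hξ
          refine hξ.2.1.le.trans (measure_mono ?_)
          intro x hx; exact ⟨hξ, hx⟩
      _ ≤ _ := setLIntegral_le_lintegral _ _
  set ω := (volume Ω).toReal with hω
  have ωe : volume Ω = ENNReal.ofReal ω := (ENNReal.ofReal_toReal Ωfin).symm
  have k2 : (volume Ω * ENNReal.ofReal (τ / 2)) ^ 4 * ENNReal.ofReal (l ^ (4 * (n:ℝ) + 7 + 16 * η)) ≤
      ENNReal.ofReal K * ENNReal.ofReal τ * ENNReal.ofReal (V ^ 7) :=
    (mul_le_mul_left (pow_le_pow_left₀ zero_le lower 4) _).trans k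
  rw [ωe, ← ENNReal.ofReal_mul ENNReal.toReal_nonneg, ← ENNReal.ofReal_pow (by positivity), ← ENNReal.ofReal_mul (by positivity),
    ← ENNReal.ofReal_mul hK.le, ← ENNReal.ofReal_mul (by positivity), ENNReal.ofReal_le_ofReal_iff (by positivity)] at k2
  rw [ωe]
  apply ENNReal.ofReal_le_ofReal
  refine interp_real ω b τ V l K κ _ ENNReal.toReal_nonneg ?_ hb0 hτ hV hl hK hκ hκ1 k2
  have := ENNReal.toReal_mono bfin (measure_mono (μ := volume) (Set.inter_subset_left : Ω ⊆ _))
  rw [hb, hω]; linarith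

theorem level_bound {n : ℕ} (hn : 5 ≤ n) (κ η C a : ℝ) (hκ : 0 < κ) (hκ1 : κ ≤ 1) (hη : 0 < η) (ha : 3 * κ / 4 < a) :
    ∃ K : ℝ, 0 < K ∧ ∀ (E : Set (Euc n × ℝ)), MeasurableSet E → ∀ V : ℝ, 0 < V → volume E ≤ ENNReal.ofReal V →
    ∀ l : ℝ, 0 < l →
    ∫⁻ ξ in Metric.ball (0 : Euc n) C, volume (Prod.mk ξ ⁻¹' Lv E l) ^ a ≤
    ENNReal.ofReal (K * (V ^ (a + κ) * l ^ (-(a - 3 * κ / 4 + κ * (4 * (n:ℝ) + 7 + 16 * η) / 4)))) := by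
  obtain ⟨K, hK, hom⟩ := omega_bound hn κ η C hκ hκ1 hη
  have ha0 : 0 < a := by linarith
  have hsig : 0 < a - 3 * κ / 4 := by linarith
  set θ : ℝ := (1 / 2) ^ (a - 3 * κ / 4) with hθ
  have θ0 : 0 < θ := by positivity
  have θ1 : θ < 1 := Real.rpow_lt_one (by norm_num) (by norm_num) hsig
  have hθi : 0 < (1 - θ)⁻¹ := inv_pos.2 (by linarith)
  refine ⟨K * (1 - θ)⁻¹, by positivity, ?_⟩
  intro E hE V hV hVE l hl
  set m : Euc n → ℝ≥0∞ := fun ξ => volume (Prod.mk ξ ⁻¹' Lv E l) with hm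
  have mm : Measurable m := measurable_measure_prodMk_left (Lv_meas hE l)
  set X := V / l with hX
  have X0 : 0 < X := by positivity
  set N := 4 * (n:ℝ) + 7 + 16 * η with hN
  set τ : ℕ → ℝ := fun k => X * (1 / 2) ^ k with hτ
  have τ0 : ∀ k, 0 < τ k := fun k => by simp only [hτ]; positivity
  set S : ℕ → Set (Euc n) := fun k => {ξ | ENNReal.ofReal (τ k / 2) < m ξ ∧ m ξ ≤ ENNReal.ofReal (τ k)} with hS
  have Sm : ∀ k, MeasurableSet (S k) := fun k =>
    ((measurableSet_lt measurable_const mm).inter (measurableSet_le mm measurable_const))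
  have pt : ∀ ξ, m ξ ^ a ≤ ∑' k, (S k).indicator (fun _ => ENNReal.ofReal (τ k ^ a)) ξ := by
    intro ξ
    by_cases h0 : m ξ = 0
    · rw [h0, ENNReal.zero_rpow_of_pos ha0]; exact zero_le
    obtain ⟨k, h1, h2⟩ := dyad X X0 (m ξ) (Lv_le hE l V hl hV hVE ξ) h0
    refine le_trans ?_ (ENNReal.le_tsum k)
    rw [Set.indicator_of_mem (show ξ ∈ S k from ⟨h1, h2⟩), ← ENNReal.ofReal_rpow_of_pos (τ0 k)]
    exact ENNReal.rpow_le_rpow h2 ha0.le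
  calc ∫⁻ ξ in Metric.ball (0 : Euc n) C, m ξ ^ a
      ≤ ∫⁻ ξ in Metric.ball (0 : Euc n) C, ∑' k, (S k).indicator (fun _ => ENNReal.ofReal (τ k ^ a)) ξ :=
        lintegral_mono pt
    _ = ∑' k, ∫⁻ ξ in Metric.ball (0 : Euc n) C, (S k).indicator (fun _ => ENNReal.ofReal (τ k ^ a)) ξ :=
        lintegral_tsum fun k => (measurable_const.indicator (Sm k)).aemeasurable
    _ = ∑' k, ENNReal.ofReal (τ k ^ a) * volume (Metric.ball (0 : Euc n) C ∩ S k) := by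
        congr 1; ext k
        rw [lintegral_indicator (Sm k), setLIntegral_const, Measure.restrict_apply (Sm k), Set.inter_comm]
    _ ≤ ∑' k, ENNReal.ofReal ((K * (V ^ (a + κ) * l ^ (-(a - 3 * κ / 4 + κ * N / 4)))) * θ ^ k) := by
        apply ENNReal.tsum_le_tsum
        intro k
        refine (mul_le_mul_right (hom E hE V hV hVE l hl (τ k) (τ0 k)) _).trans (le_of_eq ?_)
        rw [← ENNReal.ofReal_mul (by have := τ0 k; positivity)]
        congr 1
        have e1 : τ k ^ a * τ k ^ (-(3 * κ / 4)) = τ k ^ (a - 3 * κ / 4) := by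
          rw [← Real.rpow_add (τ0 k)]; congr 1
        have e2 : τ k ^ (a - 3 * κ / 4) = V ^ (a - 3 * κ / 4) * l ^ (-(a - 3 * κ / 4)) * θ ^ k := by
          simp only [hτ, hX]
          rw [Real.mul_rpow (by positivity) (by positivity), Real.div_rpow hV.le hl.le, Real.rpow_neg hl.le, hθ,
            ← Real.rpow_natCast, ← Real.rpow_natCast, ← Real.rpow_mul (by norm_num), ← Real.rpow_mul (by norm_num),
            mul_comm (k:ℝ), div_eq_mul_inv]
        have e3 : V ^ (a + κ) = V ^ (a - 3 * κ / 4) * V ^ (7 * κ / 4) := by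
          rw [← Real.rpow_add hV]; congr 1; ring
        have e4 : l ^ (-(a - 3 * κ / 4 + κ * N / 4)) = l ^ (-(a - 3 * κ / 4)) * l ^ (-(κ * N / 4)) := by
          rw [← Real.rpow_add hl]; congr 1; ring
        rw [e3, e4]
        calc _ = K * (τ k ^ a * τ k ^ (-(3 * κ / 4))) * V ^ (7 * κ / 4) * l ^ (-(κ * N / 4)) := by ring
          _ = _ := by rw [e1, e2]; ring
    _ = _ := by
        rw [geo _ _ (by positivity) θ0.le θ1]; congr 1; ring

theorem restr {n : ℕ} (hn : 5 ≤ n) (κ η C a q r : ℝ) (hκ : 0 < κ) (hκ1 : κ ≤ 1) (hη : 0 < η) (ha : 3 * κ / 4 < a)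
    (ha1 : a ≤ 1) (hr : 0 < r) (hra : r * a = q) (hq : a - 3 * κ / 4 + κ * (4 * (n:ℝ) + 7 + 16 * η) / 4 < q) :
    ∃ K : ℝ, 0 < K ∧ ∀ (E : Set (Euc n × ℝ)), MeasurableSet E → ∀ V : ℝ, 0 < V → volume E ≤ ENNReal.ofReal V →
    ∫⁻ ξ in Metric.ball (0 : Euc n) C, (∫⁻ x, xrayT (E.indicator (fun _ => (1:ℝ≥0∞))) ξ x ^ r) ^ a ≤
    ENNReal.ofReal (K * V ^ (a + κ)) := by
  obtain ⟨K, hK, hlev⟩ := level_bound hn κ η C a hκ hκ1 hη ha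
  have ha0 : 0 < a := by linarith
  set N := 4 * (n:ℝ) + 7 + 16 * η with hN
  set σ := a - 3 * κ / 4 + κ * N / 4 with hσ
  set θ : ℝ := (1 / 2) ^ (q - σ) with hθ
  have θ0 : 0 < θ := by positivity
  have θ1 : θ < 1 := Real.rpow_lt_one (by norm_num) (by norm_num) (by linarith)
  have hθi : 0 < (1 - θ)⁻¹ := inv_pos.2 (by linarith)
  refine ⟨K * (1 / 2) ^ (-σ) * (1 - θ)⁻¹, by positivity, ?_⟩
  intro E hE V hV hVE
  set T : Euc n → Euc n → ℝ≥0∞ := xrayT (E.indicator (fun _ => (1:ℝ≥0∞))) with hT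
  have T1 : ∀ ξ x, T ξ x ≤ 1 := fun ξ x => xrayT_le_one _ (fun z => Set.indicator_le_self' (by simp) z) ξ x
  set l : ℕ → ℝ := fun i => (1 / 2) ^ i / 2 with hl
  have l0 : ∀ i, 0 < l i := fun i => by simp only [hl]; positivity
  have slm : ∀ i ξ, MeasurableSet (Prod.mk ξ ⁻¹' Lv E (l i)) := fun i ξ => measurable_prodMk_left (Lv_meas hE (l i))
  have mm : ∀ i, Measurable fun ξ => volume (Prod.mk ξ ⁻¹' Lv E (l i)) := fun i =>
    measurable_measure_prodMk_left (Lv_meas hE (l i))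
  have pt : ∀ ξ x, T ξ x ^ r ≤ ∑' i : ℕ, (Prod.mk ξ ⁻¹' Lv E (l i)).indicator (fun _ => ENNReal.ofReal (((1 / 2) ^ i) ^ r)) x := by
    intro ξ x
    by_cases h0 : T ξ x = 0
    · rw [h0, ENNReal.zero_rpow_of_pos hr]; exact zero_le
    obtain ⟨k, h1, h2⟩ := dyad 1 one_pos (T ξ x) (by simpa using T1 ξ x) h0
    rw [one_mul] at h1 h2
    refine le_trans ?_ (ENNReal.le_tsum k)
    rw [Set.indicator_of_mem (show x ∈ Prod.mk ξ ⁻¹' Lv E (l k) from h1.le), ← ENNReal.ofReal_rpow_of_pos (by positivity)]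
    exact ENNReal.rpow_le_rpow h2 hr.le
  have inner : ∀ ξ, (∫⁻ x, T ξ x ^ r) ^ a ≤ ∑' i : ℕ, ENNReal.ofReal (((1 / 2) ^ i) ^ q) * volume (Prod.mk ξ ⁻¹' Lv E (l i)) ^ a := by
    intro ξ
    have h1 : ∫⁻ x, T ξ x ^ r ≤ ∑' i : ℕ, ENNReal.ofReal (((1 / 2) ^ i) ^ r) * volume (Prod.mk ξ ⁻¹' Lv E (l i)) := by
      refine (lintegral_mono (pt ξ)).trans (le_of_eq ?_)
      rw [lintegral_tsum fun k => (measurable_const.indicator (slm k ξ)).aemeasurable]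
      congr 1; ext i
      rw [lintegral_indicator (slm i ξ), setLIntegral_const]
    refine (ENNReal.rpow_le_rpow h1 ha0.le).trans ((rpow_tsum_le _ a ha0 ha1).trans (le_of_eq ?_))
    congr 1; ext i
    rw [ENNReal.mul_rpow_of_nonneg _ _ ha0.le, ENNReal.ofReal_rpow_of_pos (by positivity), ← Real.rpow_mul (by positivity), hra]
  calc _ ≤ ∫⁻ ξ in Metric.ball (0 : Euc n) C, ∑' i : ℕ, ENNReal.ofReal (((1 / 2) ^ i) ^ q) * volume (Prod.mk ξ ⁻¹' Lv E (l i)) ^ a :=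
        lintegral_mono inner
    _ = ∑' i : ℕ, ENNReal.ofReal (((1 / 2) ^ i) ^ q) * ∫⁻ ξ in Metric.ball (0 : Euc n) C, volume (Prod.mk ξ ⁻¹' Lv E (l i)) ^ a := by
        rw [lintegral_tsum fun i => (((mm i).pow_const a).const_mul _).aemeasurable]
        congr 1; ext i
        rw [lintegral_const_mul' _ _ ENNReal.ofReal_ne_top]
    _ ≤ ∑' i : ℕ, ENNReal.ofReal ((K * (1 / 2) ^ (-σ) * V ^ (a + κ)) * θ ^ i) := by
        apply ENNReal.tsum_le_tsum
        intro i
        refine (mul_le_mul_right (hlev E hE V hV hVE (l i) (l0 i)) _).trans (le_of_eq ?_)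
        rw [← ENNReal.ofReal_mul (by positivity)]
        congr 1
        have e1 : l i ^ (-σ) = (1 / 2) ^ (-σ) * ((1 / 2) ^ i) ^ (-σ) := by
          simp only [hl]
          rw [← Real.mul_rpow (by norm_num) (by positivity)]; congr 1; ring
        have e2 : ((1 / 2 : ℝ) ^ i) ^ q * ((1 / 2) ^ i) ^ (-σ) = θ ^ i := by
          rw [← Real.rpow_add (by positivity), hθ, ← Real.rpow_natCast, ← Real.rpow_natCast, ← Real.rpow_mul (by norm_num),
            ← Real.rpow_mul (by norm_num), mul_comm (i:ℝ)]
          congr 1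
        rw [e1, ← e2]; ring
    _ = _ := by
        rw [geo _ _ (by positivity) θ0.le θ1]; congr 1; ring


theorem triv {n : ℕ} (C a r : ℝ) (ha : 0 < a) (hr : 1 ≤ r) :
    ∃ K : ℝ, 0 < K ∧ ∀ (E : Set (Euc n × ℝ)), MeasurableSet E → ∀ V : ℝ, 0 < V → volume E ≤ ENNReal.ofReal V →
    ∫⁻ ξ in Metric.ball (0 : Euc n) C, (∫⁻ x, xrayT (E.indicator (fun _ => (1:ℝ≥0∞))) ξ x ^ r) ^ a ≤
    ENNReal.ofReal (K * V ^ a) := by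
  set b : ℝ := (volume (Metric.ball (0 : Euc n) C)).toReal + 1 with hb
  refine ⟨b, by positivity, ?_⟩
  intro E hE V hV hVE
  have T1 : ∀ ξ x, xrayT (E.indicator (fun _ => (1:ℝ≥0∞))) ξ x ≤ 1 := fun ξ x =>
    xrayT_le_one _ (fun z => Set.indicator_le_self' (by simp) z) ξ x
  have bfin : volume (Metric.ball (0 : Euc n) C) ≠ ∞ := measure_ball_lt_top.ne
  have hbb : volume (Metric.ball (0 : Euc n) C) ≤ ENNReal.ofReal b := by
    rw [ENNReal.le_ofReal_iff_toReal_le bfin (by positivity)]; linarith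
  have h1 : ∀ ξ, (∫⁻ x, xrayT (E.indicator (fun _ => (1:ℝ≥0∞))) ξ x ^ r) ^ a ≤ ENNReal.ofReal (V ^ a) := by
    intro ξ
    rw [← ENNReal.ofReal_rpow_of_pos hV]
    refine ENNReal.rpow_le_rpow ?_ ha.le
    calc _ ≤ ∫⁻ x, xrayT (E.indicator (fun _ => (1:ℝ≥0∞))) ξ x := by
          apply lintegral_mono; intro x
          calc _ ≤ xrayT (E.indicator (fun _ => (1:ℝ≥0∞))) ξ x ^ (1:ℝ) :=
                ENNReal.rpow_le_rpow_of_exponent_ge (T1 ξ x) hr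
            _ = _ := by simp
      _ ≤ ∫⁻ z, E.indicator (fun _ => (1:ℝ≥0∞)) z := xrayT_int (measurable_const.indicator hE) ξ
      _ = volume E := by rw [lintegral_indicator hE]; simp
      _ ≤ _ := hVE
  calc _ ≤ ∫⁻ ξ in Metric.ball (0 : Euc n) C, ENNReal.ofReal (V ^ a) := lintegral_mono h1
    _ = ENNReal.ofReal (V ^ a) * volume (Metric.ball (0 : Euc n) C) := by simp
    _ ≤ ENNReal.ofReal (V ^ a) * ENNReal.ofReal b := by gcongr
    _ = _ := by rw [← ENNReal.ofReal_mul (by positivity), mul_comm]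

theorem tsum_int (g : ℤ → ℝ≥0∞) : ∑' k, g k = (∑' n : ℕ, g n) + ∑' n : ℕ, g (-((n:ℤ) + 1)) :=
  tsum_of_nat_of_neg_add_one ENNReal.summable ENNReal.summable

theorem geo2 (c s t : ℝ) (hc : 0 ≤ c) (hs : s < 0) :
    ∑' k : ℕ, ENNReal.ofReal (c * 2 ^ (s * k + t)) = ENNReal.ofReal (c * 2 ^ t * (1 - 2 ^ s)⁻¹) := by
  rw [← geo (c * 2 ^ t) (2 ^ s) (by positivity) (by positivity) (Real.rpow_lt_one_of_one_lt_of_neg (by norm_num) hs)]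
  congr 1; ext k
  rw [Real.rpow_add (by norm_num), Real.rpow_mul (by norm_num), Real.rpow_natCast]
  congr 1; ring

theorem sum_rpow (δ r : ℝ) (hδ : 0 < δ) (hr : 0 < r) : ∃ D : ℝ, 0 < D ∧ ∀ b : ℤ → ℝ≥0∞,
    (∑' k, b k) ^ r ≤ ENNReal.ofReal D * ∑' k : ℤ, ENNReal.ofReal (2 ^ (δ * |(k:ℝ)| * r)) * b k ^ r := by
  have h1 : 0 < (1 - (2:ℝ) ^ (-δ))⁻¹ :=
    inv_pos.2 (sub_pos.2 (Real.rpow_lt_one_of_one_lt_of_neg (by norm_num) (by linarith)))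
  set D0 : ℝ := 1 * 2 ^ (0:ℝ) * (1 - 2 ^ (-δ))⁻¹ + 1 * 2 ^ (-δ) * (1 - 2 ^ (-δ))⁻¹ with hD0
  have D0p : 0 < D0 := by positivity
  have hsum : ∑' k : ℤ, ENNReal.ofReal (2 ^ (-(δ * |(k:ℝ)|))) = ENNReal.ofReal D0 := by
    rw [tsum_int, hD0, ENNReal.ofReal_add (by positivity) (by positivity), ← geo2 1 (-δ) 0 (by norm_num) (by linarith),
      ← geo2 1 (-δ) (-δ) (by norm_num) (by linarith)]
    congr 1
    · congr 1; ext k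
      rw [one_mul]; congr 2
      have : (0:ℝ) ≤ k := by positivity
      push_cast
      rw [abs_of_nonneg this]; ring
    · congr 1; ext k
      rw [one_mul]; congr 2
      have : (0:ℝ) ≤ (k:ℝ) + 1 := by positivity
      push_cast
      rw [abs_neg, abs_of_nonneg this]; ring
  refine ⟨D0 ^ r, by positivity, ?_⟩
  intro b
  set S := ∑' k : ℤ, ENNReal.ofReal (2 ^ (δ * |(k:ℝ)| * r)) * b k ^ r with hS
  have hb : ∀ k, b k ≤ ENNReal.ofReal (2 ^ (-(δ * |(k:ℝ)|))) * S ^ (1 / r) := by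
    intro k
    have h2 : ENNReal.ofReal (2 ^ (δ * |(k:ℝ)|)) * b k ≤ S ^ (1 / r) := by
      rw [one_div, ENNReal.le_rpow_inv_iff hr, ENNReal.mul_rpow_of_nonneg _ _ hr.le, ENNReal.ofReal_rpow_of_pos (by positivity),
        ← Real.rpow_mul (by norm_num)]
      exact ENNReal.le_tsum (f := fun k : ℤ => ENNReal.ofReal (2 ^ (δ * |(k:ℝ)| * r)) * b k ^ r) k
    calc b k = ENNReal.ofReal (2 ^ (-(δ * |(k:ℝ)|))) * (ENNReal.ofReal (2 ^ (δ * |(k:ℝ)|)) * b k) := by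
          rw [← mul_assoc, ← ENNReal.ofReal_mul (by positivity), ← Real.rpow_add (by norm_num)]; simp
      _ ≤ _ := by gcongr
  calc (∑' k, b k) ^ r ≤ (∑' k : ℤ, ENNReal.ofReal (2 ^ (-(δ * |(k:ℝ)|))) * S ^ (1 / r)) ^ r :=
        ENNReal.rpow_le_rpow (ENNReal.tsum_le_tsum hb) hr.le
    _ = ENNReal.ofReal (D0 ^ r) * S := by
        rw [ENNReal.tsum_mul_right, hsum, ENNReal.mul_rpow_of_nonneg _ _ hr.le, ENNReal.ofReal_rpow_of_pos D0p,
          ← ENNReal.rpow_mul, one_div_mul_cancel hr.ne', ENNReal.rpow_one]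

theorem layer {α : Type*} (f : α → ℝ≥0∞) (z : α) :
    f z ≤ ∑' k : ℤ, ENNReal.ofReal (2 ^ ((k:ℝ) + 1)) *
      {z | ENNReal.ofReal (2 ^ (k:ℝ)) ≤ f z}.indicator (fun _ => (1:ℝ≥0∞)) z := by
  by_cases h0 : f z = 0
  · rw [h0]; exact zero_le
  by_cases ht : f z = ∞
  · have : ∑' k : ℤ, ENNReal.ofReal (2 ^ ((k:ℝ) + 1)) *
      {z | ENNReal.ofReal (2 ^ (k:ℝ)) ≤ f z}.indicator (fun _ => (1:ℝ≥0∞)) z = ∞ := by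
      rw [tsum_int, eq_top_iff]
      refine le_trans ?_ le_self_add
      rw [← ENNReal.tsum_const_eq_top_of_ne_zero (α := ℕ) one_ne_zero]
      apply ENNReal.tsum_le_tsum
      intro k
      rw [Set.indicator_of_mem (by simp [ht]), mul_one, ENNReal.one_le_ofReal]
      apply Real.one_le_rpow (by norm_num)
      positivity
    rw [this]; exact le_top
  have hp : 0 < (f z).toReal := ENNReal.toReal_pos h0 ht
  obtain ⟨k, h1, h2⟩ := exists_mem_Ico_zpow hp (show (1:ℝ) < 2 by norm_num)
  refine le_trans ?_ (ENNReal.le_tsum k)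
  have h3 : ENNReal.ofReal (2 ^ (k:ℝ)) ≤ f z := by
    rw [ENNReal.ofReal_le_iff_le_toReal ht, Real.rpow_intCast]; exact h1
  rw [Set.indicator_of_mem (show z ∈ {z | ENNReal.ofReal (2 ^ (k:ℝ)) ≤ f z} from h3), mul_one,
    ENNReal.le_ofReal_iff_toReal_le ht (by positivity)]
  have e : (2:ℝ) ^ ((k:ℝ) + 1) = 2 ^ (k + 1) := by
    rw [← Real.rpow_intCast]; push_cast; rfl
  rw [e]; exact h2.le

theorem xrayT_layer {n : ℕ} {f : Euc n × ℝ → ℝ≥0∞} (hf : Measurable f) (ξ x : Euc n) :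
    xrayT f ξ x ≤ ∑' k : ℤ, ENNReal.ofReal (2 ^ ((k:ℝ) + 1)) *
      xrayT ({z | ENNReal.ofReal (2 ^ (k:ℝ)) ≤ f z}.indicator (fun _ => (1:ℝ≥0∞))) ξ x := by
  have Em : ∀ k : ℤ, Measurable ({z | ENNReal.ofReal (2 ^ (k:ℝ)) ≤ f z}.indicator (fun _ => (1:ℝ≥0∞))) := fun k =>
    measurable_const.indicator (measurableSet_le measurable_const hf)
  unfold xrayT
  calc _ ≤ ∫⁻ t in Set.Ioc (0:ℝ) 1, ∑' k : ℤ, ENNReal.ofReal (2 ^ ((k:ℝ) + 1)) *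
      {z | ENNReal.ofReal (2 ^ (k:ℝ)) ≤ f z}.indicator (fun _ => (1:ℝ≥0∞)) (x + t • ξ, t) :=
        lintegral_mono fun t => layer f _
    _ = _ := by
        rw [lintegral_tsum]
        · congr 1; ext k
          rw [lintegral_const_mul' _ _ ENNReal.ofReal_ne_top]
        · intro k
          have := Em k
          exact Measurable.aemeasurable ((this.comp (by fun_prop : Measurable fun t : ℝ => (x + t • ξ, t))).const_mul _)


theorem level_vol {n : ℕ} {f : Euc n × ℝ → ℝ≥0∞} (hf : Measurable f) (p : ℝ) (hp : 0 < p) (hI : ∫⁻ z, f z ^ p ≤ 1) (k : ℤ) :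
    volume {z | ENNReal.ofReal (2 ^ (k:ℝ)) ≤ f z} ≤ ENNReal.ofReal (2 ^ (-(k * p))) := by
  have h := (mul_meas_ge_le_lintegral (μ := volume) (hf.pow_const p) (ENNReal.ofReal (2 ^ ((k:ℝ) * p)))).trans hI
  have e : {z | ENNReal.ofReal (2 ^ ((k:ℝ) * p)) ≤ f z ^ p} = {z | ENNReal.ofReal (2 ^ (k:ℝ)) ≤ f z} := by
    ext z
    simp only [Set.mem_ofPred_eq]
    rw [Real.rpow_mul (by norm_num), ← ENNReal.ofReal_rpow_of_pos (by positivity), ENNReal.rpow_le_rpow_iff hp]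
  rw [e] at h
  have e2 : (1:ℝ≥0∞) = ENNReal.ofReal (2 ^ ((k:ℝ) * p)) * ENNReal.ofReal (2 ^ (-(k * p))) := by
    rw [← ENNReal.ofReal_mul (by positivity), ← Real.rpow_add (by norm_num)]; simp
  rw [e2] at h
  refine (ENNReal.mul_le_mul_iff_right ?_ ENNReal.ofReal_ne_top).1 h
  have : (0:ℝ) < 2 ^ ((k:ℝ) * p) := by positivity
  simpa using this

theorem normalised {n : ℕ} (C a κ p q r K1 K2 : ℝ) (ha : 0 < a) (ha1 : a ≤ 1) (hp : 0 < p) (hr : 0 < r)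
    (hra : r * a = q) (hK1 : 0 < K1) (hK2 : 0 < K2)
    (h1 : ∀ (E : Set (Euc n × ℝ)), MeasurableSet E → ∀ V : ℝ, 0 < V → volume E ≤ ENNReal.ofReal V →
    ∫⁻ ξ in Metric.ball (0 : Euc n) C, (∫⁻ x, xrayT (E.indicator (fun _ => (1:ℝ≥0∞))) ξ x ^ r) ^ a ≤
    ENNReal.ofReal (K1 * V ^ (a + κ)))
    (h2 : ∀ (E : Set (Euc n × ℝ)), MeasurableSet E → ∀ V : ℝ, 0 < V → volume E ≤ ENNReal.ofReal V →
    ∫⁻ ξ in Metric.ball (0 : Euc n) C, (∫⁻ x, xrayT (E.indicator (fun _ => (1:ℝ≥0∞))) ξ x ^ r) ^ a ≤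
    ENNReal.ofReal (K2 * V ^ a))
    (c1 : q < p * (a + κ)) (c2 : p * a < q) :
    ∃ K : ℝ, 0 < K ∧ ∀ f : Euc n × ℝ → ℝ≥0∞, Measurable f → ∫⁻ z, f z ^ p ≤ 1 →
    ∫⁻ ξ in Metric.ball (0 : Euc n) C, (∫⁻ x, xrayT f ξ x ^ r) ^ a ≤ ENNReal.ofReal K := by
  have hq : 0 < q := by rw [← hra]; positivity
  obtain ⟨ν, ν0, hν⟩ := exists_between (lt_min (sub_pos.2 c1) (sub_pos.2 c2))
  have ν1 : ν < p * (a + κ) - q := hν.trans_le (min_le_left _ _)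
  have ν2 : ν < q - p * a := hν.trans_le (min_le_right _ _)
  set δ := ν / q with hδ
  have δ0 : 0 < δ := by positivity
  have δq : δ * q = ν := by rw [hδ]; field_simp
  obtain ⟨D, D0, hD⟩ := sum_rpow δ r δ0 hr
  have inv1 : 0 < (1 - (2:ℝ) ^ (ν + q - p * (a + κ)))⁻¹ :=
    inv_pos.2 (sub_pos.2 (Real.rpow_lt_one_of_one_lt_of_neg (by norm_num) (by linarith)))
  have inv2 : 0 < (1 - (2:ℝ) ^ (ν - q + p * a))⁻¹ :=
    inv_pos.2 (sub_pos.2 (Real.rpow_lt_one_of_one_lt_of_neg (by norm_num) (by linarith)))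
  refine ⟨D ^ a * (K1 * 2 ^ q * (1 - (2:ℝ) ^ (ν + q - p * (a + κ)))⁻¹ +
    K2 * 2 ^ (ν + p * a) * (1 - (2:ℝ) ^ (ν - q + p * a))⁻¹), by positivity, ?_⟩
  intro f hf hI
  set χ : ℤ → Euc n × ℝ → ℝ≥0∞ := fun k => {z | ENNReal.ofReal (2 ^ (k:ℝ)) ≤ f z}.indicator (fun _ => (1:ℝ≥0∞)) with hχ
  have Em : ∀ k : ℤ, MeasurableSet {z | ENNReal.ofReal (2 ^ (k:ℝ)) ≤ f z} := fun k => measurableSet_le measurable_const hf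
  have χm : ∀ k, Measurable (χ k) := fun k => measurable_const.indicator (Em k)
  have Tm : ∀ k, Measurable fun z : Euc n × Euc n => xrayT (χ k) z.1 z.2 ^ r := fun k => (xrayT_meas (χm k)).pow_const r
  set R : ℤ → ℝ≥0∞ := fun k => ∫⁻ ξ in Metric.ball (0 : Euc n) C, (∫⁻ x, xrayT (χ k) ξ x ^ r) ^ a with hR
  have pt : ∀ ξ x, xrayT f ξ x ^ r ≤ ENNReal.ofReal D * ∑' k : ℤ, ENNReal.ofReal (2 ^ ((δ * |(k:ℝ)| + k + 1) * r)) *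
      xrayT (χ k) ξ x ^ r := by
    intro ξ x
    refine (ENNReal.rpow_le_rpow (xrayT_layer hf ξ x) hr.le).trans ((hD _).trans (le_of_eq ?_))
    congr 2; ext k
    rw [ENNReal.mul_rpow_of_nonneg _ _ hr.le, ENNReal.ofReal_rpow_of_pos (by positivity), ← mul_assoc,
      ← ENNReal.ofReal_mul (by positivity), ← Real.rpow_mul (by norm_num), ← Real.rpow_add (by norm_num)]
    congr 4; ring
  have inner : ∀ ξ, (∫⁻ x, xrayT f ξ x ^ r) ^ a ≤ ENNReal.ofReal (D ^ a) *
      ∑' k : ℤ, ENNReal.ofReal (2 ^ ((δ * |(k:ℝ)| + k + 1) * q)) * (∫⁻ x, xrayT (χ k) ξ x ^ r) ^ a := by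
    intro ξ
    have h : ∫⁻ x, xrayT f ξ x ^ r ≤ ENNReal.ofReal D *
        ∑' k : ℤ, ENNReal.ofReal (2 ^ ((δ * |(k:ℝ)| + k + 1) * r)) * ∫⁻ x, xrayT (χ k) ξ x ^ r := by
      refine (lintegral_mono (pt ξ)).trans (le_of_eq ?_)
      rw [lintegral_const_mul' _ _ ENNReal.ofReal_ne_top, lintegral_tsum]
      · congr 2; ext k
        rw [lintegral_const_mul' _ _ ENNReal.ofReal_ne_top]
      · intro k
        exact Measurable.aemeasurable (((Tm k).comp measurable_prodMk_left).const_mul _)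
    refine (ENNReal.rpow_le_rpow h ha.le).trans ?_
    rw [ENNReal.mul_rpow_of_nonneg _ _ ha.le, ENNReal.ofReal_rpow_of_pos D0]
    refine mul_le_mul_right ((rpow_tsum_le _ a ha ha1).trans (le_of_eq ?_)) _
    congr 1; ext k
    rw [ENNReal.mul_rpow_of_nonneg _ _ ha.le, ENNReal.ofReal_rpow_of_pos (by positivity), ← Real.rpow_mul (by norm_num),
      mul_assoc, hra]
  have Rle1 : ∀ k, R k ≤ ENNReal.ofReal (K1 * 2 ^ (-(k * p) * (a + κ))) := by
    intro k
    refine (h1 _ (Em k) _ (by positivity) (level_vol hf p hp hI k)).trans (le_of_eq ?_)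
    rw [← Real.rpow_mul (by norm_num)]
  have Rle2 : ∀ k, R k ≤ ENNReal.ofReal (K2 * 2 ^ (-(k * p) * a)) := by
    intro k
    refine (h2 _ (Em k) _ (by positivity) (level_vol hf p hp hI k)).trans (le_of_eq ?_)
    rw [← Real.rpow_mul (by norm_num)]
  calc _ ≤ ∫⁻ ξ in Metric.ball (0 : Euc n) C, ENNReal.ofReal (D ^ a) *
      ∑' k : ℤ, ENNReal.ofReal (2 ^ ((δ * |(k:ℝ)| + k + 1) * q)) * (∫⁻ x, xrayT (χ k) ξ x ^ r) ^ a := lintegral_mono inner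
    _ = ENNReal.ofReal (D ^ a) * ∑' k : ℤ, ENNReal.ofReal (2 ^ ((δ * |(k:ℝ)| + k + 1) * q)) * R k := by
        rw [lintegral_const_mul' _ _ ENNReal.ofReal_ne_top, lintegral_tsum]
        · congr 2; ext k
          rw [lintegral_const_mul' _ _ ENNReal.ofReal_ne_top]
        · intro k
          exact Measurable.aemeasurable (((Tm k).lintegral_prod_right'.pow_const a).const_mul _)
    _ ≤ _ := by
        rw [ENNReal.ofReal_mul (by positivity), ENNReal.ofReal_add (by positivity) (by positivity),
          ← geo2 K1 _ _ hK1.le (by linarith), ← geo2 K2 _ _ hK2.le (by linarith), tsum_int]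
        refine mul_le_mul_right (add_le_add (ENNReal.tsum_le_tsum fun k => ?_) (ENNReal.tsum_le_tsum fun k => ?_)) _
        · refine (mul_le_mul_right (Rle1 k) _).trans (le_of_eq ?_)
          rw [← ENNReal.ofReal_mul (by positivity), mul_left_comm, ← Real.rpow_add (by norm_num)]
          congr 3
          have : (0:ℝ) ≤ k := by positivity
          push_cast
          rw [abs_of_nonneg this, ← δq]; ring
        · refine (mul_le_mul_right (Rle2 _) _).trans (le_of_eq ?_)
          rw [← ENNReal.ofReal_mul (by positivity), mul_left_comm, ← Real.rpow_add (by norm_num)]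
          congr 3
          have : (0:ℝ) ≤ (k:ℝ) + 1 := by positivity
          push_cast
          rw [abs_neg, abs_of_nonneg this, ← δq]; ring

theorem homog {n : ℕ} (C a p q r K : ℝ) (hp : 0 < p) (hq : 0 < q) (hr : 0 < r) (ha : a = q / r) (hK : 0 < K)
    (h : ∀ f : Euc n × ℝ → ℝ≥0∞, Measurable f → ∫⁻ z, f z ^ p ≤ 1 →
    ∫⁻ ξ in Metric.ball (0 : Euc n) C, (∫⁻ x, xrayT f ξ x ^ r) ^ a ≤ ENNReal.ofReal K)
    (f : Euc n × ℝ → ℝ≥0∞) (hf : Measurable f) :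
    kakeyaMixedNorm q r C f ≤ ENNReal.ofReal (K ^ (1 / q)) * lpNorm p f := by
  have ha0 : 0 < a := by rw [ha]; positivity
  have hra : r * a = q := by rw [ha]; field_simp
  set Q := ∫⁻ ξ in Metric.ball (0 : Euc n) C, (∫⁻ x, xrayT f ξ x ^ r) ^ a with hQ
  have key : ∀ s : ℝ, 0 < s → ∫⁻ z, f z ^ p ≤ ENNReal.ofReal s → Q ≤ ENNReal.ofReal (K * s ^ (q / p)) := by
    intro s hs hI
    set c : ℝ := s ^ (-(1 / p)) with hc
    have c0 : 0 < c := by positivity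
    have e1 : ∫⁻ z, (ENNReal.ofReal c * f z) ^ p ≤ 1 := by
      simp only [ENNReal.mul_rpow_of_nonneg _ _ hp.le, ENNReal.ofReal_rpow_of_pos c0]
      rw [lintegral_const_mul' _ _ ENNReal.ofReal_ne_top]
      refine (mul_le_mul_right hI _).trans (le_of_eq ?_)
      rw [← ENNReal.ofReal_mul (by positivity), hc, ← Real.rpow_mul hs.le,
        show -(1 / p) * p = -1 by field_simp, Real.rpow_neg_one, inv_mul_cancel₀ hs.ne', ENNReal.ofReal_one]
    have e2 := h (fun z => ENNReal.ofReal c * f z) (hf.const_mul _) e1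
    have e3 : ∀ ξ x, xrayT (fun z => ENNReal.ofReal c * f z) ξ x = ENNReal.ofReal c * xrayT f ξ x := by
      intro ξ x
      unfold xrayT
      rw [lintegral_const_mul' _ _ ENNReal.ofReal_ne_top]
    simp only [e3, ENNReal.mul_rpow_of_nonneg _ _ hr.le, ENNReal.ofReal_rpow_of_pos c0,
      lintegral_const_mul' _ _ ENNReal.ofReal_ne_top, ENNReal.mul_rpow_of_nonneg _ _ ha0.le,
      ENNReal.ofReal_rpow_of_pos (Real.rpow_pos_of_pos c0 r), ← Real.rpow_mul c0.le, hra] at e2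
    have e4 : ENNReal.ofReal K = ENNReal.ofReal (c ^ q) * ENNReal.ofReal (K * s ^ (q / p)) := by
      rw [← ENNReal.ofReal_mul (by positivity), hc, ← Real.rpow_mul hs.le, mul_left_comm, ← Real.rpow_add hs,
        show -(1 / p) * q + q / p = 0 by ring, Real.rpow_zero, mul_one]
    rw [e4] at e2
    refine (ENNReal.mul_le_mul_iff_right ?_ ENNReal.ofReal_ne_top).1 e2
    have : 0 < c ^ q := by positivity
    simpa using this
  unfold kakeyaMixedNorm _root_.lpNorm
  rw [← ha, ← hQ]
  set I := ∫⁻ z, f z ^ p with hI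
  have A0 : ENNReal.ofReal (K ^ (1 / q)) ≠ 0 := by
    have : 0 < K ^ (1 / q) := by positivity
    simpa using this
  have lim : (Q ^ (1 / q) / ENNReal.ofReal (K ^ (1 / q))) ^ p ≤ I := by
    apply le_of_forall_gt_imp_ge_of_dense
    intro s hs
    by_cases hst : s = ∞
    · rw [hst]; exact le_top
    have s0 : 0 < s.toReal := ENNReal.toReal_pos (ne_bot_of_gt hs) hst
    have hk := key s.toReal s0 (by rw [ENNReal.ofReal_toReal hst]; exact hs.le)
    have hk2 : Q ^ (1 / q) ≤ ENNReal.ofReal (K ^ (1 / q)) * s ^ (1 / p) := by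
      refine (ENNReal.rpow_le_rpow hk (by positivity)).trans (le_of_eq ?_)
      rw [ENNReal.ofReal_rpow_of_pos (by positivity), Real.mul_rpow hK.le (by positivity), ← Real.rpow_mul s0.le,
        ENNReal.ofReal_mul (by positivity), show q / p * (1 / q) = 1 / p by field_simp, ← ENNReal.ofReal_rpow_of_pos s0,
        ENNReal.ofReal_toReal hst]
    have hk3 := ENNReal.div_le_of_le_mul' hk2
    refine (ENNReal.rpow_le_rpow hk3 hp.le).trans (le_of_eq ?_)
    rw [← ENNReal.rpow_mul, one_div_mul_cancel hp.ne', ENNReal.rpow_one]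
  have l2 : Q ^ (1 / q) / ENNReal.ofReal (K ^ (1 / q)) ≤ I ^ (1 / p) := by
    rw [one_div p, ENNReal.le_rpow_inv_iff hp]; exact lim
  rw [mul_comm]
  exact (ENNReal.div_le_iff A0 ENNReal.ofReal_ne_top).1 l2

theorem params (N ε : ℝ) (hN : 27 ≤ N) (h0 : 0 < ε) (h1 : ε < 1) (p q r a : ℝ) (hp : p = N / 7) (hq : q = N / 4 - ε)
    (hr : r = N / 3 - ε) (ha : a = q / r) :
    ∃ κ η : ℝ, 0 < κ ∧ κ ≤ 1 ∧ 0 < η ∧ 3 * κ / 4 < a ∧ a - 3 * κ / 4 + κ * (N + 16 * η) / 4 < q ∧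
      q < p * (a + κ) := by
  have q0 : 0 < q := by rw [hq]; linarith
  have r0 : 0 < r := by rw [hr]; linarith
  have p0 : 0 < p := by rw [hp]; linarith
  set κ0 := q / p - a with hκ0
  have ek : κ0 = q * (4 * N - 21 * ε) / (N * (N - 3 * ε)) := by
    have : N - 3 * ε ≠ 0 := by linarith
    have : N ≠ 0 := by linarith
    rw [hκ0, ha, hp, hr]
    have : N / 3 - ε ≠ 0 := by linarith
    field_simp
    ring
  have ea : a = 3 * q / (N - 3 * ε) := by
    have : N - 3 * ε ≠ 0 := by linarith
    have : N / 3 - ε ≠ 0 := by linarith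
    rw [ha, hr]; field_simp
  have d0 : 0 < N - 3 * ε := by linarith
  have N0 : 0 < N := by linarith
  have k0 : 0 < κ0 := by
    rw [ek]
    have : 0 < 4 * N - 21 * ε := by linarith
    positivity
  have b1 : κ0 < 1 := by
    rw [ek, div_lt_one (by positivity), hq]
    nlinarith
  have b2 : κ0 < 4 * a / 3 := by
    rw [ek, ea, div_lt_iff₀ (by positivity)]
    have : 4 * (3 * q / (N - 3 * ε)) / 3 * (N * (N - 3 * ε)) = q * (4 * N) := by field_simp
    rw [this]
    apply mul_lt_mul_of_pos_left _ q0
    linarith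
  have b3 : κ0 < 4 * (q - a) / (N - 3) := by
    have n3 : 0 < N - 3 := by linarith
    rw [lt_div_iff₀ n3, ek, ea]
    have e : 4 * (q - 3 * q / (N - 3 * ε)) = q * (4 * N * (N - 3 * ε - 3)) / (N * (N - 3 * ε)) := by
      field_simp
    rw [e, div_mul_eq_mul_div, div_lt_div_iff_of_pos_right (by positivity), mul_assoc]
    apply mul_lt_mul_of_pos_left _ q0
    nlinarith
  obtain ⟨κ, hk1, hk2⟩ := exists_between (lt_min b1 (lt_min b2 b3))
  have c1 : κ < 1 := hk2.trans_le (min_le_left _ _)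
  have c2 : κ < 4 * a / 3 := hk2.trans_le ((min_le_right _ _).trans (min_le_left _ _))
  have c3 : κ < 4 * (q - a) / (N - 3) := hk2.trans_le ((min_le_right _ _).trans (min_le_right _ _))
  rw [lt_div_iff₀ (by linarith)] at c3
  have κp : 0 < κ := k0.trans hk1
  refine ⟨κ, (4 * (q - a) - κ * (N - 3)) / (32 * κ), κp, c1.le, div_pos (by linarith) (by linarith), by linarith, ?_, ?_⟩
  · have : κ * (N + 16 * ((4 * (q - a) - κ * (N - 3)) / (32 * κ))) = κ * N + (4 * (q - a) - κ * (N - 3)) / 2 := by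
      field_simp; ring
    rw [this]; linarith
  · have : q / p < a + κ := by rw [hκ0] at hk1; linarith
    rw [div_lt_iff₀ p0] at this; linarith

/-- Theorem 1: for `d ≥ 6`, `(p,q,r) = ((4d+3)/7, (4d+3)/4 - ε, (4d+3)/3 - ε)`,
the Kakeya-order mixed norm bound `‖T[f]‖_{L^q(L^r),K} ≲ ‖f‖_{L^p(ℝ^d)}` holds. -/
theorem statement0 (d : ℕ) (hd : 6 ≤ d) (ε : ℝ) (hε : ε ∈ Set.Ioo (0:ℝ) 1)
    (p q r : ℝ) (hp : p = (4 * (d:ℝ) + 3) / 7) (hq : q = (4 * (d:ℝ) + 3) / 4 - ε)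
    (hr : r = (4 * (d:ℝ) + 3) / 3 - ε) (C : ℝ) (hC : 0 < C) :
    ∃ A : ℝ, 0 < A ∧ ∀ f : Euc (d - 1) × ℝ → ℝ≥0∞, Measurable f →
      kakeyaMixedNorm q r C f ≤ ENNReal.ofReal A * lpNorm p f := by
  obtain ⟨n, rfl⟩ : ∃ n, d = n + 1 := ⟨d - 1, by omega⟩
  rw [Nat.add_sub_cancel]
  have hn : 5 ≤ n := by omega
  have hn' : (5:ℝ) ≤ n := by exact_mod_cast hn
  obtain ⟨ε0, ε1⟩ := hε
  have eN : 4 * ((n + 1 : ℕ):ℝ) + 3 = 4 * (n:ℝ) + 7 := by push_cast; ring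
  rw [eN] at hp hq hr
  set N := 4 * (n:ℝ) + 7 with hN
  have N27 : 27 ≤ N := by linarith
  have q0 : 0 < q := by rw [hq]; linarith
  have r0 : 0 < r := by rw [hr]; linarith
  have r1 : 1 ≤ r := by rw [hr]; linarith
  have p0 : 0 < p := by rw [hp]; linarith
  set a := q / r with ha
  have ha0 : 0 < a := by positivity
  have ha1 : a ≤ 1 := by rw [ha, div_le_one r0, hq, hr]; linarith
  have hra : r * a = q := by rw [ha]; field_simp
  have c2 : p * a < q := by
    rw [← hra]
    apply mul_lt_mul_of_pos_right _ ha0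
    rw [hp, hr]; linarith
  obtain ⟨κ, η, κ0, κ1, η0, h3, h4, h5⟩ := params N ε N27 ε0 ε1 p q r a hp hq hr ha
  obtain ⟨K1, hK1, hr1⟩ := restr hn κ η C a q r κ0 κ1 η0 h3 ha1 r0 hra h4
  obtain ⟨K2, hK2, hr2⟩ := triv (n := n) C a r ha0 r1
  obtain ⟨K, hK, hnorm⟩ := normalised C a κ p q r K1 K2 ha0 ha1 p0 r0 hra hK1 hK2 hr1 hr2 h5 c2
  exact ⟨K ^ (1 / q), by positivity, homog C a p q r K p0 q0 r0 ha hK hnorm⟩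

end
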